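/- For each m ∈ {−1, 0, 1}, the function φ_m is twice continuously differentiable on (0,∞)×ℝ, satisfies v ∂ₓφ_m(x,v) = ∂_vvφ_m(x,v) for all (x,v) ∈ (0,∞)×ℝ, and satisfies φ_m(x,v) → 0 as x → 0⁺ for every fixed v > 0. Moreover, φ₀ and φ₁ are weak solutions of v∂ₓφ − ∂_vvφ = 0 in (0,∞)×ℝ with boundary data 0 on {0}×(0,∞). -/

import Mathlib

/-!
All three functions are self-similar, `φ(x,v) = x^α G(v x^{-1/3})` with `α = -5/6, 1/6, 7/6`. Such
a field solves `v ∂ₓφ = ∂ᵥᵥφ` on `(0,∞) × ℝ` exactly when its profile satisfies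
`G'' + (t²/3) G' - α t G = 0` on all of `ℝ` (`IsProfile`, `IsProfile.solves`), and it tends to `0`
at `{0} × (0,∞)` when `G` decays rapidly at `+∞` (`selfSim_decay`).

The profile `G0` of `φ₀` is given by two formulas, for `t < 0` and `t ≥ 0`, in terms of the
integrals `J p q z = ∫₀^∞ e^{-s} s^{q-1} (z+s)^{-p} ds` at `z = ∓t³/9`. Differentiation under the
integral, the contiguous relations `J_split` and `J_parts`, and Kummer's transformation `J_swap`
(a consequence of Fubini's theorem, `Gamma_mul_laplace`) show that for `t ≠ 0` its derivative is
`H0`, a multiple of `J (1/6) (5/6)` that is continuous across `t = 0`, and that `H0` satisfies the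
profile equation. Since `G0`, `H0` are continuous at `0`, both identities extend to `t = 0`
(`G0_deriv`, `H0_deriv`); this is the regularity across `v = 0`. The other two profiles are
polynomial combinations of `G0` and `H0`, namely `6 G0 - 12 t H0` for `φ₋₁` and
`(5/6 + t³/9) G0 + (t/3) H0` for `φ₁`, so their profile equations follow by algebra; the contiguous
relations identify these combinations with the given formulas.

For the weak formulation (`weak_of_classical`), integrate by parts over `x > ε`: the only remaining
term is `∫ v φ(ε,v) ψ(ε,v) dv`. It tends to `0` by dominated convergence, because `φ` is locally
bounded up to `x = 0`, `φ(ε,v) → 0` for `v > 0`, and `ψ(0,v) = 0` for `v < 0`. The bound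
`∂ᵥφ = O(x^{-1/6})` makes all the integrands integrable up to the boundary.
-/

noncomputable section

open MeasureTheory Set Filter
open scoped ENNReal

/-- The one-dimensional phase space, with points `p = (x, v)`. -/
abbrev P2 : Type := ℝ × ℝ

/-- `hv` is the weak derivative of `h` in the second (velocity) variable on `D`. -/
def IsWeakVDeriv (D : Set P2) (h hv : P2 → ℝ) : Prop :=
  ∀ ψ : P2 → ℝ, ContDiff ℝ ((⊤ : ℕ∞) : WithTop ℕ∞) ψ → HasCompactSupport ψ →
    tsupport ψ ⊆ D →
    (∫ p in D, h p * fderiv ℝ ψ p ((0:ℝ), (1:ℝ))) = -∫ p in D, hv p * ψ p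

/-- `U₁(z) = (1/Γ(5/6)) ∫₀^∞ e^{−zξ} ξ^{−1/6} (1+ξ)^{−7/6} dξ`. -/
def U1 (z : ℝ) : ℝ :=
  (1 / Real.Gamma (5/6)) *
    ∫ ξ in Set.Ioi (0:ℝ), Real.exp (-(z * ξ)) * ξ ^ (-(1:ℝ)/6) * (1 + ξ) ^ (-(7:ℝ)/6)

/-- `U₂(z) = (1/Γ(1/6)) ∫₀^∞ e^{−ξ} ξ^{−5/6} (z+ξ)^{1/6} dξ`. -/
def U2 (z : ℝ) : ℝ :=
  (1 / Real.Gamma (1/6)) *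
    ∫ ξ in Set.Ioi (0:ℝ), Real.exp (-ξ) * ξ ^ (-(5:ℝ)/6) * (z + ξ) ^ ((1:ℝ)/6)

/-- The explicit `1/2`-homogeneous solution `φ₀` of the stationary kinetic Kolmogorov equation
in the half-line with absorbing boundary condition. -/
def phi0 (x v : ℝ) : ℝ :=
  if v < 0 then x ^ ((1:ℝ)/6) * U2 (-(v ^ 3) / (9 * x))
  else (Real.Gamma (7/6) / Real.Gamma (1/6)) * x ^ ((1:ℝ)/6) *
    Real.exp (-(v ^ 3) / (9 * x)) * U1 (v ^ 3 / (9 * x))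

/-- The explicit solution `φ₋₁`. -/
def phim1 (x v : ℝ) : ℝ :=
  if v < 0 then x ^ (-(5:ℝ)/6) * U1 (-(v ^ 3) / (9 * x))
  else (Real.Gamma (1/6) / Real.Gamma (7/6)) * x ^ (-(5:ℝ)/6) *
    Real.exp (-(v ^ 3) / (9 * x)) * U2 (v ^ 3 / (9 * x))

/-- `U₃(z) = (1/Γ(11/6)) ∫₀^∞ e^{−zξ} ξ^{5/6} (1+ξ)^{−13/6} dξ`. -/
def U3 (z : ℝ) : ℝ :=
  (1 / Real.Gamma (11/6)) *
    ∫ ξ in Set.Ioi (0:ℝ), Real.exp (-(z * ξ)) * ξ ^ ((5:ℝ)/6) * (1 + ξ) ^ (-(13:ℝ)/6)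

/-- `U₄(z) = (1/36) U₁(z) − (1 − z) U₂(z)`. -/
def U4 (z : ℝ) : ℝ := (1/36) * U1 z - (1 - z) * U2 z

/-- The explicit `7/2`-homogeneous solution `φ₁`, where `Γ(−5/6) = −(6/5)Γ(1/6)`. -/
def phi1 (x v : ℝ) : ℝ :=
  if v < 0 then -(x ^ ((7:ℝ)/6) * U4 (-(v ^ 3) / (9 * x)))
  else -((Real.Gamma (13/6) / (-(6/5) * Real.Gamma (1/6))) * x ^ ((7:ℝ)/6) *
    Real.exp (-(v ^ 3) / (9 * x)) * U3 (v ^ 3 / (9 * x)))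

/-- partial derivative in the first (space) variable -/
def pdx (h : P2 → ℝ) : P2 → ℝ := fun p => fderiv ℝ h p ((1:ℝ), (0:ℝ))

/-- partial derivative in the second (velocity) variable -/
def pdv (h : P2 → ℝ) : P2 → ℝ := fun p => fderiv ℝ h p ((0:ℝ), (1:ℝ))

/-- The half-plane `(0,∞) × ℝ`. -/
def Dinf : Set P2 := Set.Ioi (0:ℝ) ×ˢ (Set.univ : Set ℝ)

/-- Weak solution of `v ∂ₓ h − ∂ᵥᵥ h = 0` in `(0,∞) × ℝ` with `h = 0` on `{0} × (0,∞)`. -/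
def IsWeakSolZero (h hv : P2 → ℝ) : Prop :=
  LocallyIntegrableOn (fun p => h p ^ 2) Dinf ∧
  LocallyIntegrableOn (fun p => hv p ^ 2) Dinf ∧
  IsWeakVDeriv Dinf h hv ∧
  ∀ ψ : P2 → ℝ, ContDiff ℝ ((⊤ : ℕ∞) : WithTop ℕ∞) ψ → HasCompactSupport ψ →
    tsupport ψ ∩ {p : P2 | p.1 = 0} ⊆ {p : P2 | p.1 = 0 ∧ 0 ≤ p.2} →
    (-∫ p in Dinf, h p * (p.2 * fderiv ℝ ψ p ((1:ℝ), (0:ℝ))))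
        + (∫ p in Dinf, hv p * fderiv ℝ ψ p ((0:ℝ), (1:ℝ))) = 0

/-! ### The integrals `J p q z` and their contiguous relations -/

/-- The unnormalised integral `∫₀^∞ e^{-s} s^{q-1} (z+s)^{-p} ds`; for `z > 0` it equals
`Γ(q)` times the Tricomi function `U(p, p-q+1, z)`. -/
def J (p q z : ℝ) : ℝ :=
  ∫ s in Ioi (0:ℝ), Real.exp (-s) * s ^ (q - 1) * (z + s) ^ (-p)

lemma rpow_neg_le_add {a b p : ℝ} (ha : 0 < a) (hab : a ≤ b) (hp : -1 ≤ p) :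
    b ^ (-p) ≤ a ^ (-p) + (1 + b) := by
  have hb : 0 < b := ha.trans_le hab
  rcases le_or_gt 0 p with h | h
  · have := Real.rpow_le_rpow_of_nonpos ha hab (by linarith : -p ≤ 0)
    linarith
  · have h1 : b ^ (-p) ≤ 1 + b := by
      rcases le_or_gt b 1 with hb1 | hb1
      · have := Real.rpow_le_one hb.le hb1 (by linarith : 0 ≤ -p)
        linarith
      · have := Real.rpow_le_rpow_of_exponent_le hb1.le (by linarith : -p ≤ 1)
        rw [Real.rpow_one] at this
        linarith
    have := Real.rpow_pos_of_pos ha (-p)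
    linarith

lemma Jint_meas (p q z : ℝ) :
    AEStronglyMeasurable (fun s => Real.exp (-s) * s ^ (q - 1) * (z + s) ^ (-p))
      (volume.restrict (Ioi (0:ℝ))) := by
  apply Measurable.aestronglyMeasurable
  fun_prop

lemma dom_integrable {q : ℝ} (hq : 0 < q) (C : ℝ) :
    IntegrableOn (fun s => Real.exp (-s) * s ^ (q - 1) * (C + s)) (Ioi (0:ℝ)) := by
  have h1 := (Real.GammaIntegral_convergent hq).mul_const C
  have h2 := Real.GammaIntegral_convergent (by linarith : 0 < q + 1)
  refine IntegrableOn.congr_fun (h1.add h2) (fun s hs => ?_) measurableSet_Ioi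
  have hs : 0 < s := hs
  have : s ^ (q + 1 - 1) = s ^ (q - 1) * s := by
    rw [← Real.rpow_add_one hs.ne']; ring_nf
  simp only [Pi.add_apply, this]
  ring

lemma Jint_nonneg {p q z s : ℝ} (hz : 0 ≤ z) (hs : 0 < s) :
    0 ≤ Real.exp (-s) * s ^ (q - 1) * (z + s) ^ (-p) := by positivity

lemma J_integrable {p q z : ℝ} (hq : 0 < q) (hp : -1 ≤ p) (hz : 0 < z) :
    IntegrableOn (fun s => Real.exp (-s) * s ^ (q - 1) * (z + s) ^ (-p)) (Ioi (0:ℝ)) := by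
  refine Integrable.mono' (dom_integrable hq (z ^ (-p) + (1 + z))) (Jint_meas p q z) ?_
  filter_upwards [ae_restrict_mem measurableSet_Ioi] with s hs
  have hs : 0 < s := hs
  rw [Real.norm_of_nonneg (Jint_nonneg hz.le hs)]
  have := rpow_neg_le_add hz (by linarith : z ≤ z + s) hp
  gcongr
  linarith

lemma dom0_integrable {p q : ℝ} (hq : 0 < q) (hpq : p < q) (C : ℝ) :
    IntegrableOn (fun s => Real.exp (-s) * s ^ (q - 1) * (s ^ (-p) + (C + s)))
      (Ioi (0:ℝ)) := by
  have h1 := dom_integrable hq C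
  have h2 := Real.GammaIntegral_convergent (by linarith : 0 < q - p)
  refine IntegrableOn.congr_fun (h2.add h1) (fun s hs => ?_) measurableSet_Ioi
  have hs : 0 < s := hs
  have : s ^ (q - p - 1) = s ^ (q - 1) * s ^ (-p) := by
    rw [← Real.rpow_add hs]; ring_nf
  simp only [Pi.add_apply, this]
  ring

lemma J_integrable_nonneg {p q z : ℝ} (hq : 0 < q) (hp : -1 ≤ p) (hpq : p < q) (hz : 0 ≤ z) :
    IntegrableOn (fun s => Real.exp (-s) * s ^ (q - 1) * (z + s) ^ (-p)) (Ioi (0:ℝ)) := by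
  refine Integrable.mono' (dom0_integrable hq hpq (1 + z)) (Jint_meas p q z) ?_
  filter_upwards [ae_restrict_mem measurableSet_Ioi] with s hs
  have hs : 0 < s := hs
  rw [Real.norm_of_nonneg (Jint_nonneg hz hs)]
  have := rpow_neg_le_add hs (by linarith : s ≤ z + s) hp
  gcongr
  linarith

lemma J_nonneg {p q z : ℝ} (hz : 0 ≤ z) : 0 ≤ J p q z :=
  setIntegral_nonneg measurableSet_Ioi fun _ hs => Jint_nonneg hz hs

lemma J_hasDerivAt {p q z : ℝ} (hq : 0 < q) (hp : -1 ≤ p) (hz : 0 < z) :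
    HasDerivAt (J p q) (-p * J (p + 1) q z) z := by
  have key := hasDerivAt_integral_of_dominated_loc_of_deriv_le
    (μ := volume.restrict (Ioi (0:ℝ)))
    (F := fun z s => Real.exp (-s) * s ^ (q - 1) * (z + s) ^ (-p))
    (F' := fun z s => Real.exp (-s) * s ^ (q - 1) * (-p * (z + s) ^ (-(p + 1))))
    (x₀ := z) (s := Ioi (z / 2))
    (bound := fun s => Real.exp (-s) * s ^ (q - 1) * (|p| * (z / 2) ^ (-(p + 1))))
    (Ioi_mem_nhds (by linarith)) (Eventually.of_forall fun y => Jint_meas p q y)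
    (J_integrable hq hp hz) ?_ ?_ ?_ ?_
  · have h := key.2
    refine h.congr_deriv ?_
    rw [J, ← integral_const_mul]
    congr 1
    ext s
    ring
  · apply Measurable.aestronglyMeasurable
    fun_prop
  · filter_upwards [ae_restrict_mem measurableSet_Ioi] with s hs y hy
    have hs : 0 < s := hs
    have hy : z / 2 < y := hy
    have hy0 : 0 < y + s := by linarith
    have := Real.rpow_le_rpow_of_nonpos (by linarith : 0 < z / 2)
      (by linarith : z / 2 ≤ y + s) (by linarith : -(p + 1) ≤ 0)
    rw [norm_mul, norm_mul, norm_mul, Real.norm_of_nonneg (Real.exp_nonneg _),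
      Real.norm_of_nonneg (by positivity : 0 ≤ s ^ (q - 1)),
      Real.norm_of_nonneg (by positivity : 0 ≤ (y + s) ^ (-(p + 1))), norm_neg, Real.norm_eq_abs]
    gcongr
  · exact (Real.GammaIntegral_convergent hq).mul_const _
  · filter_upwards [ae_restrict_mem measurableSet_Ioi] with s hs y hy
    have hs : 0 < s := hs
    have hy : z / 2 < y := hy
    have hy0 : 0 < y + s := by linarith
    have h1 : HasDerivAt (fun y => y + s) 1 y := (hasDerivAt_id y).add_const s
    have h2 := (h1.rpow_const (p := -p) (Or.inl hy0.ne')).const_mul (Real.exp (-s) * s ^ (q - 1))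
    refine h2.congr_deriv ?_
    rw [show -p - 1 = -(p + 1) by ring]
    ring

lemma J_continuousWithinAt {p q : ℝ} (hq : 0 < q) (hp : -1 ≤ p) (hpq : p < q) :
    ContinuousWithinAt (J p q) (Ici 0) 0 := by
  refine continuousWithinAt_of_dominated (μ := volume.restrict (Ioi (0:ℝ)))
    (F := fun z s => Real.exp (-s) * s ^ (q - 1) * (z + s) ^ (-p))
    (bound := fun s => Real.exp (-s) * s ^ (q - 1) * (s ^ (-p) + (2 + s)))
    (Eventually.of_forall fun y => Jint_meas p q y) ?_ (dom0_integrable hq hpq 2) ?_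
  · have : Iio (1:ℝ) ∈ nhdsWithin (0:ℝ) (Ici 0) := mem_nhdsWithin_of_mem_nhds (Iio_mem_nhds one_pos)
    filter_upwards [this, self_mem_nhdsWithin] with z hz1 hz
    filter_upwards [ae_restrict_mem measurableSet_Ioi] with s hs
    have hs : 0 < s := hs
    have hz : 0 ≤ z := hz
    have hz1 : z < 1 := hz1
    rw [Real.norm_of_nonneg (Jint_nonneg hz hs)]
    have := rpow_neg_le_add hs (by linarith : s ≤ z + s) hp
    gcongr
    linarith
  · filter_upwards [ae_restrict_mem measurableSet_Ioi] with s hs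
    have hs : 0 < s := hs
    apply ContinuousAt.continuousWithinAt
    refine continuousAt_const.mul (ContinuousAt.rpow_const (by fun_prop) (Or.inl ?_))
    linarith

lemma J_le_zero_arg {p q z : ℝ} (hq : 0 < q) (hp : 0 ≤ p) (hpq : p < q) (hz : 0 ≤ z) :
    J p q z ≤ J p q 0 := by
  refine setIntegral_mono_on (J_integrable_nonneg hq (by linarith) hpq hz)
    (J_integrable_nonneg hq (by linarith) hpq le_rfl) measurableSet_Ioi fun s hs => ?_
  have hs : 0 < s := hs
  have := Real.rpow_le_rpow_of_nonpos (by linarith : 0 < 0 + s) (by linarith : 0 + s ≤ z + s)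
    (by linarith : -p ≤ 0)
  gcongr

/-- Contiguous relation from `(z+s)^{-p} = (z+s) (z+s)^{-(p+1)}`. -/
lemma J_split {p q z : ℝ} (hq : 0 < q) (hp : -1 ≤ p) (hz : 0 < z) :
    J p q z = z * J (p + 1) q z + J (p + 1) (q + 1) z := by
  have h1 := (J_integrable hq (by linarith : -1 ≤ p + 1) hz).const_mul z
  have h2 := J_integrable (by linarith : 0 < q + 1) (by linarith : -1 ≤ p + 1) hz
  rw [J, J, J, ← integral_const_mul, ← integral_add h1 h2]
  refine setIntegral_congr_fun measurableSet_Ioi fun s hs => ?_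
  have hs : 0 < s := hs
  have e1 : (z + s) ^ (-p) = (z + s) ^ (-(p + 1)) * (z + s) := by
    rw [← Real.rpow_add_one (by positivity)]; ring_nf
  have e2 : s ^ (q + 1 - 1) = s ^ (q - 1) * s := by
    rw [← Real.rpow_add_one hs.ne']; ring_nf
  simp only [e1, e2]
  ring

lemma J_zero_shift (p q : ℝ) : J p q 0 = J (p + 1) (q + 1) 0 := by
  refine setIntegral_congr_fun measurableSet_Ioi fun s hs => ?_
  have hs : 0 < s := hs
  simp only [zero_add, mul_assoc]
  rw [← Real.rpow_add hs, ← Real.rpow_add hs]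
  ring_nf

lemma J_zero_eq_Gamma {p q : ℝ} (hpq : p < q) : J p q 0 = Real.Gamma (q - p) := by
  rw [Real.Gamma_eq_integral (by linarith)]
  refine setIntegral_congr_fun measurableSet_Ioi fun s hs => ?_
  have hs : 0 < s := hs
  simp only [zero_add, mul_assoc]
  rw [← Real.rpow_add hs]
  ring_nf

/-- Contiguous relation obtained by integrating the derivative of `e^{-s} s^q (z+s)^{-p}`. -/
lemma J_parts {p q z : ℝ} (hq : 0 < q) (hp : 0 ≤ p) (hz : 0 < z) :
    q * J p q z = J p (q + 1) z + p * J (p + 1) (q + 1) z := by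
  have h1 := (J_integrable hq (by linarith : -1 ≤ p) hz).const_mul q
  have h2 := J_integrable (by linarith : 0 < q + 1) (by linarith : -1 ≤ p) hz
  have h3 := (J_integrable (by linarith : 0 < q + 1) (by linarith : -1 ≤ p + 1) hz).const_mul p
  have key := integral_Ioi_of_hasDerivAt_of_tendsto (a := 0) (m := 0)
    (f := fun s => Real.exp (-s) * s ^ q * (z + s) ^ (-p))
    (f' := fun s => q * (Real.exp (-s) * s ^ (q - 1) * (z + s) ^ (-p))
      - Real.exp (-s) * s ^ (q + 1 - 1) * (z + s) ^ (-p)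
      - p * (Real.exp (-s) * s ^ (q + 1 - 1) * (z + s) ^ (-(p + 1)))) ?_ ?_ ((h1.sub h2).sub h3) ?_
  · have e1 := integral_sub (h1.sub h2) h3
    have e2 := integral_sub h1 h2
    simp only [Pi.sub_apply] at e1
    rw [e1, e2, integral_const_mul, integral_const_mul] at key
    simp only [Real.zero_rpow hq.ne'] at key
    simp only [J]
    linarith
  · apply ContinuousAt.continuousWithinAt
    have c1 : ContinuousAt (fun s : ℝ => s ^ q) 0 :=
      Real.continuousAt_rpow_const _ _ (Or.inr hq.le)
    have c2 : ContinuousAt (fun s : ℝ => (z + s) ^ (-p)) 0 :=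
      ContinuousAt.rpow_const (by fun_prop) (Or.inl (by linarith))
    exact ((by fun_prop : ContinuousAt (fun s : ℝ => Real.exp (-s)) 0).mul c1).mul c2
  · intro s hs
    have hs : 0 < s := hs
    have hzs : z + s ≠ 0 := by positivity
    have d1 : HasDerivAt (fun s : ℝ => Real.exp (-s)) (-Real.exp (-s)) s := by
      simpa using (hasDerivAt_neg s).exp
    have d2 : HasDerivAt (fun s : ℝ => s ^ q) (q * s ^ (q - 1)) s :=
      Real.hasDerivAt_rpow_const (Or.inl hs.ne')
    have d3 : HasDerivAt (fun s : ℝ => (z + s) ^ (-p)) (1 * (-p) * (z + s) ^ (-p - 1)) s :=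
      ((hasDerivAt_id s).const_add z).rpow_const (Or.inl hzs)
    refine ((d1.mul d2).mul d3).congr_deriv ?_
    simp only [Pi.mul_apply]
    rw [show -p - 1 = -(p + 1) by ring, show q + 1 - 1 = q by ring]
    ring
  · have t1 : Tendsto (fun s : ℝ => s ^ q * Real.exp (-1 * s)) atTop (nhds 0) :=
      tendsto_rpow_mul_exp_neg_mul_atTop_nhds_zero q 1 one_pos
    have t2 := t1.mul_const (z ^ (-p))
    rw [zero_mul] at t2
    refine squeeze_zero' ?_ ?_ t2
    · filter_upwards [eventually_gt_atTop 0] with s hs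
      positivity
    · filter_upwards [eventually_gt_atTop 0] with s hs
      have := Real.rpow_le_rpow_of_nonpos hz (by linarith : z ≤ z + s) (by linarith : -p ≤ 0)
      rw [neg_one_mul, mul_comm (s ^ q)]
      gcongr

/-- Laplace-type representation of `J`: both sides are iterated integrals of
`e^{-zξ-s-sξ} ξ^{p-1} s^{q-1}`. -/
lemma Gamma_mul_laplace {p q z : ℝ} (hp : 0 < p) (hq : 0 < q) (hz : 0 ≤ z) :
    Real.Gamma q * ∫ ξ in Ioi (0:ℝ), Real.exp (-(z * ξ)) * ξ ^ (p - 1) * (1 + ξ) ^ (-q)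
      = Real.Gamma p * J p q z := by
  let k : ℝ → ℝ → ℝ := fun ξ s =>
    Real.exp (-(z * ξ) - s - s * ξ) * ξ ^ (p - 1) * s ^ (q - 1)
  have inner1 : ∀ ξ ∈ Ioi (0:ℝ), ∫⁻ s in Ioi (0:ℝ), ENNReal.ofReal (k ξ s)
      = ENNReal.ofReal (Real.Gamma q *
        (Real.exp (-(z * ξ)) * ξ ^ (p - 1) * (1 + ξ) ^ (-q))) := by
    intro ξ hξ
    have hξ : 0 < ξ := hξ
    have hi := Real.integral_rpow_mul_exp_neg_mul_Ioi hq (by linarith : 0 < 1 + ξ)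
    have hint : IntegrableOn (fun s : ℝ => s ^ (q - 1) * Real.exp (-((1 + ξ) * s))) (Ioi 0) := by
      have := integrableOn_rpow_mul_exp_neg_mul_rpow (by linarith : -1 < q - 1) one_pos
        (by linarith : 0 < 1 + ξ)
      simpa only [Real.rpow_one, neg_mul] using this
    have hk : ∀ s, k ξ s = (Real.exp (-(z * ξ)) * ξ ^ (p - 1)) *
        (s ^ (q - 1) * Real.exp (-((1 + ξ) * s))) := by
      intro s
      simp only [k]
      rw [show -(z * ξ) - s - s * ξ = -(z * ξ) + -((1 + ξ) * s) by ring, Real.exp_add]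
      ring
    simp only [hk]
    rw [← ofReal_integral_eq_lintegral_ofReal (hint.const_mul _), integral_const_mul, hi,
      one_div, Real.inv_rpow (by positivity), ← Real.rpow_neg (by positivity)]
    · congr 1
      ring
    · filter_upwards [ae_restrict_mem measurableSet_Ioi] with s hs
      have hs : 0 < s := hs
      simp only [Pi.zero_apply]
      positivity
  have inner2 : ∀ s ∈ Ioi (0:ℝ), ∫⁻ ξ in Ioi (0:ℝ), ENNReal.ofReal (k ξ s)
      = ENNReal.ofReal (Real.Gamma p *
        (Real.exp (-s) * s ^ (q - 1) * (z + s) ^ (-p))) := by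
    intro s hs
    have hs : 0 < s := hs
    have hi := Real.integral_rpow_mul_exp_neg_mul_Ioi hp (by linarith : 0 < z + s)
    have hint : IntegrableOn (fun ξ : ℝ => ξ ^ (p - 1) * Real.exp (-((z + s) * ξ))) (Ioi 0) := by
      have := integrableOn_rpow_mul_exp_neg_mul_rpow (by linarith : -1 < p - 1) one_pos
        (by linarith : 0 < z + s)
      simpa only [Real.rpow_one, neg_mul] using this
    have hk : ∀ ξ, k ξ s = (Real.exp (-s) * s ^ (q - 1)) *
        (ξ ^ (p - 1) * Real.exp (-((z + s) * ξ))) := by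
      intro ξ
      simp only [k]
      rw [show -(z * ξ) - s - s * ξ = -s + -((z + s) * ξ) by ring, Real.exp_add]
      ring
    simp only [hk]
    rw [← ofReal_integral_eq_lintegral_ofReal (hint.const_mul _), integral_const_mul, hi,
      one_div, Real.inv_rpow (by positivity), ← Real.rpow_neg (by positivity)]
    · congr 1
      ring
    · filter_upwards [ae_restrict_mem measurableSet_Ioi] with ξ hξ
      have hξ : 0 < ξ := hξ
      simp only [Pi.zero_apply]
      positivity
  have swap := lintegral_lintegral_swap (μ := volume.restrict (Ioi (0:ℝ)))
    (ν := volume.restrict (Ioi (0:ℝ))) (f := fun ξ s => ENNReal.ofReal (k ξ s))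
    (by
      apply Measurable.aemeasurable
      simp only [k, Function.uncurry_def]
      fun_prop)
  rw [setLIntegral_congr_fun measurableSet_Ioi inner1,
    setLIntegral_congr_fun measurableSet_Ioi inner2] at swap
  have hΓp := Real.Gamma_pos_of_pos hp
  have hΓq := Real.Gamma_pos_of_pos hq
  rw [J, ← integral_const_mul, ← integral_const_mul, integral_eq_lintegral_of_nonneg_ae,
    integral_eq_lintegral_of_nonneg_ae, swap]
  · filter_upwards [ae_restrict_mem measurableSet_Ioi] with s hs
    exact mul_nonneg hΓp.le (Jint_nonneg hz hs)
  · exact (Jint_meas p q z).const_mul _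
  · filter_upwards [ae_restrict_mem measurableSet_Ioi] with ξ hξ
    have hξ : 0 < ξ := hξ
    simp only [Pi.zero_apply]
    positivity
  · apply Measurable.aestronglyMeasurable
    fun_prop

/-- Kummer's transformation, exchanging the two parameters of `J`. -/
lemma J_swap {p q z : ℝ} (hp : 0 < p) (hq : 0 < q) (hz : 0 < z) :
    Real.Gamma p * J p q z = z ^ (q - p) * Real.Gamma q * J q p z := by
  have h1 := Gamma_mul_laplace hq hp hz.le
  have h2 : J p q z = z ^ (q - p) *
      ∫ ξ in Ioi (0:ℝ), Real.exp (-(z * ξ)) * ξ ^ (q - 1) * (1 + ξ) ^ (-p) := by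
    have := integral_comp_mul_left_Ioi
      (fun s => Real.exp (-s) * s ^ (q - 1) * (z + s) ^ (-p)) 0 hz
    rw [mul_zero, smul_eq_mul, inv_mul_eq_div, eq_div_iff hz.ne'] at this
    rw [J, ← this, ← integral_mul_const, ← integral_const_mul]
    refine setIntegral_congr_fun measurableSet_Ioi fun ξ hξ => ?_
    have hξ : 0 < ξ := hξ
    have e1 : (z * ξ) ^ (q - 1) = z ^ (q - 1) * ξ ^ (q - 1) := Real.mul_rpow hz.le hξ.le
    have e2 : (z + z * ξ) ^ (-p) = z ^ (-p) * (1 + ξ) ^ (-p) := by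
      rw [← Real.mul_rpow hz.le (by positivity)]; ring_nf
    have e3 : z ^ (q - p) = z ^ (q - 1) * z ^ (-p) * z := by
      rw [← Real.rpow_add hz, ← Real.rpow_add_one hz.ne']; ring_nf
    simp only [e1, e2, e3]
    ring
  rw [h2, mul_left_comm, h1]
  ring

/-! ### The self-similar profile of `φ₀` -/

/-- The constant `1 / (2 · 9^{1/3} · Γ(5/6))` normalising the derivative of the profile. -/
def kap : ℝ := 1 / (2 * (9:ℝ) ^ ((1:ℝ)/3) * Real.Gamma (5/6))

/-- The profile of `φ₀`: `φ₀(x,v) = x^{1/6} G0(v x^{-1/3})`. -/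
def G0 (t : ℝ) : ℝ :=
  if t < 0 then J (-1/6) (1/6) (-(t ^ 3) / 9) / Real.Gamma (1/6)
  else Real.exp (-(t ^ 3) / 9) * J (5/6) (7/6) (t ^ 3 / 9) / Real.Gamma (1/6)

/-- The derivative of `G0`, written through `J (1/6) (5/6)`, which is continuous up to `0`. -/
def H0 (t : ℝ) : ℝ :=
  if t < 0 then -kap * J (1/6) (5/6) (-(t ^ 3) / 9)
  else -kap * (Real.exp (-(t ^ 3) / 9) * J (1/6) (5/6) (t ^ 3 / 9))

lemma Gamma_sixth_pos : 0 < Real.Gamma (1/6) := Real.Gamma_pos_of_pos (by norm_num)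

lemma Gamma_seven_sixths : Real.Gamma (7/6) = Real.Gamma (1/6) / 6 := by
  have := Real.Gamma_add_one (by norm_num : (1/6:ℝ) ≠ 0)
  rw [show (1/6:ℝ) + 1 = 7/6 by norm_num] at this
  rw [this]; ring

lemma Gamma_thirteen_sixths : Real.Gamma (13/6) = 7/36 * Real.Gamma (1/6) := by
  have := Real.Gamma_add_one (by norm_num : (7/6:ℝ) ≠ 0)
  rw [show (7/6:ℝ) + 1 = 13/6 by norm_num, Gamma_seven_sixths] at this
  rw [this]; ring

lemma nine_cbrt_cube : ((9:ℝ) ^ ((1:ℝ)/3)) ^ 3 = 9 := by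
  rw [← Real.rpow_natCast, ← Real.rpow_mul (by norm_num)]; norm_num

lemma cube_div_nine_rpow {t : ℝ} (ht : 0 < t) (a : ℝ) :
    (t ^ 3 / 9) ^ a = (t / (9:ℝ) ^ ((1:ℝ)/3)) ^ (3 * a) := by
  rw [Real.rpow_mul (by positivity)]
  congr 1
  rw [show (3:ℝ) = ((3:ℕ):ℝ) by norm_num, Real.rpow_natCast, div_pow]
  congr 1
  have := nine_cbrt_cube
  norm_num at this ⊢
  exact this.symm

/-- The Kummer swap at `z = t³/9`. It turns `t² J (5/6) (1/6)`, whose second factor is singular at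
`z = 0`, into a function continuous up to `t = 0`. -/
lemma swap_one {t : ℝ} (ht : 0 < t) :
    t ^ 2 * J (5/6) (1/6) (t ^ 3 / 9)
      = 18 * Real.Gamma (1/6) * kap * J (1/6) (5/6) (t ^ 3 / 9) := by
  have h := J_swap (by norm_num : (0:ℝ) < 5/6) (by norm_num : (0:ℝ) < 1/6)
    (by positivity : 0 < t ^ 3 / 9)
  have hr := nine_cbrt_cube
  rw [cube_div_nine_rpow ht, show (3:ℝ) * (1/6 - 5/6) = -((2:ℕ):ℝ) by norm_num,
    Real.rpow_neg (by positivity), Real.rpow_natCast] at h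
  have hΓ : 0 < Real.Gamma (5/6) := Real.Gamma_pos_of_pos (by norm_num)
  rw [kap]
  have hr0 : 0 < (9:ℝ) ^ ((1:ℝ)/3) := by positivity
  generalize (9:ℝ) ^ ((1:ℝ)/3) = r at *
  field_simp at h ⊢
  linear_combination 2 * r * h + 2 * Real.Gamma (1/6) * J (1/6) (5/6) (t^3/9) * hr

lemma swap_two {t : ℝ} (ht : 0 < t) :
    J (5/6) (7/6) (t ^ 3 / 9)
      = kap * Real.Gamma (1/6) * t / 3 * J (7/6) (5/6) (t ^ 3 / 9) := by
  have h := J_swap (by norm_num : (0:ℝ) < 5/6) (by norm_num : (0:ℝ) < 7/6)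
    (by positivity : 0 < t ^ 3 / 9)
  rw [cube_div_nine_rpow ht, show (3:ℝ) * (7/6 - 5/6) = 1 by norm_num,
    Real.rpow_one, Gamma_seven_sixths] at h
  have hΓ : 0 < Real.Gamma (5/6) := Real.Gamma_pos_of_pos (by norm_num)
  rw [kap]
  have hr0 : 0 < (9:ℝ) ^ ((1:ℝ)/3) := by positivity
  generalize (9:ℝ) ^ ((1:ℝ)/3) = r at *
  field_simp at h ⊢
  linear_combination h

lemma split_one {z : ℝ} (hz : 0 < z) :
    J (-1/6) (1/6) z = z * J (5/6) (1/6) z + J (5/6) (7/6) z := by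
  have := J_split (by norm_num : (0:ℝ) < 1/6) (by norm_num : (-1:ℝ) ≤ -1/6) hz
  rwa [show (-1/6:ℝ) + 1 = 5/6 by norm_num, show (1/6:ℝ) + 1 = 7/6 by norm_num] at this

lemma parts_one {z : ℝ} (hz : 0 < z) :
    1/6 * J (5/6) (1/6) z = J (5/6) (7/6) z + 5/6 * J (11/6) (7/6) z := by
  have := J_parts (by norm_num : (0:ℝ) < 1/6) (by norm_num : (0:ℝ) ≤ 5/6) hz
  rwa [show (5/6:ℝ) + 1 = 11/6 by norm_num, show (1/6:ℝ) + 1 = 7/6 by norm_num] at this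

lemma split_two {z : ℝ} (hz : 0 < z) :
    J (5/6) (7/6) z = z * J (11/6) (7/6) z + J (11/6) (13/6) z := by
  have := J_split (by norm_num : (0:ℝ) < 7/6) (by norm_num : (-1:ℝ) ≤ 5/6) hz
  rwa [show (5/6:ℝ) + 1 = 11/6 by norm_num, show (7/6:ℝ) + 1 = 13/6 by norm_num] at this

lemma hasDerivAt_cube (t : ℝ) : HasDerivAt (fun t : ℝ => t ^ 3 / 9) (t ^ 2 / 3) t := by
  refine ((hasDerivAt_pow 3 t).div_const 9).congr_deriv ?_
  norm_num
  ring

lemma hasDerivAt_neg_cube (t : ℝ) : HasDerivAt (fun t : ℝ => -(t ^ 3) / 9) (-(t ^ 2 / 3)) t := by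
  refine ((hasDerivAt_pow 3 t).neg.div_const 9).congr_deriv ?_
  norm_num
  ring

lemma neg_cube_div_pos {t : ℝ} (ht : t < 0) : 0 < -(t ^ 3) / 9 := by
  have : 0 < (-t) ^ 3 := pow_pos (by linarith) 3
  nlinarith

lemma neg_cube_eq (t : ℝ) : -(t ^ 3) / 9 = (-t) ^ 3 / 9 := by ring

lemma G0_deriv_ne {t : ℝ} (ht : t ≠ 0) : HasDerivAt G0 (H0 t) t := by
  have hg := Gamma_sixth_pos
  rcases lt_or_gt_of_ne ht with h | h
  · have hz := neg_cube_div_pos h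
    have d1 := J_hasDerivAt (by norm_num : (0:ℝ) < 1/6) (by norm_num : (-1:ℝ) ≤ -1/6) hz
    have d2 := (d1.comp t (hasDerivAt_neg_cube t)).div_const (Real.Gamma (1/6))
    have s1 := swap_one (by linarith : 0 < -t)
    have : G0 =ᶠ[nhds t] fun t => J (-1/6) (1/6) (-(t ^ 3) / 9) / Real.Gamma (1/6) := by
      filter_upwards [Iio_mem_nhds h] with u hu
      simp [G0, show u < 0 from hu]
    refine (d2.congr_of_eventuallyEq this).congr_deriv ?_
    rw [H0, if_pos h, show (-1/6:ℝ) + 1 = 5/6 by norm_num]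
    rw [← neg_cube_eq] at s1
    generalize J (5/6) (1/6) (-(t ^ 3) / 9) = a at *
    generalize J (1/6) (5/6) (-(t ^ 3) / 9) = b at *
    field_simp
    linear_combination -s1
  · have hz : 0 < t ^ 3 / 9 := by positivity
    have d1 := J_hasDerivAt (by norm_num : (0:ℝ) < 7/6) (by norm_num : (-1:ℝ) ≤ 5/6) hz
    have d2 := ((hasDerivAt_neg_cube t).exp.mul (d1.comp t (hasDerivAt_cube t))).div_const
      (Real.Gamma (1/6))
    have s1 := swap_one h
    have s2 := parts_one hz
    have : G0 =ᶠ[nhds t] fun t =>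
        Real.exp (-(t ^ 3) / 9) * J (5/6) (7/6) (t ^ 3 / 9) / Real.Gamma (1/6) := by
      filter_upwards [Ioi_mem_nhds h] with u hu
      simp [G0, not_lt.2 (le_of_lt (show 0 < u from hu))]
    refine (d2.congr_of_eventuallyEq this).congr_deriv ?_
    rw [H0, if_neg (not_lt.2 h.le), show (5/6:ℝ) + 1 = 11/6 by norm_num]
    simp only [Function.comp_apply]
    generalize Real.exp (-(t ^ 3) / 9) = e
    field_simp
    linear_combination (-e) * s1 + 6 * e * t ^ 2 * s2

lemma H0_deriv_ne {t : ℝ} (ht : t ≠ 0) :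
    HasDerivAt H0 (t / 6 * G0 t - t ^ 2 / 3 * H0 t) t := by
  have hg := Gamma_sixth_pos
  rcases lt_or_gt_of_ne ht with h | h
  · have hz := neg_cube_div_pos h
    have d1 := J_hasDerivAt (by norm_num : (0:ℝ) < 5/6) (by norm_num : (-1:ℝ) ≤ 1/6) hz
    have d2 := (d1.comp t (hasDerivAt_neg_cube t)).const_mul (-kap)
    have s1 := swap_one (by linarith : 0 < -t)
    have s2 := swap_two (by linarith : 0 < -t)
    have s3 := split_one hz
    rw [← neg_cube_eq] at s1 s2
    have : H0 =ᶠ[nhds t] fun t => -kap * J (1/6) (5/6) (-(t ^ 3) / 9) := by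
      filter_upwards [Iio_mem_nhds h] with u hu
      simp [H0, show u < 0 from hu]
    refine (d2.congr_of_eventuallyEq this).congr_deriv ?_
    rw [H0, if_pos h, G0, if_pos h, show (1/6:ℝ) + 1 = 7/6 by norm_num, s3, s2]
    generalize J (5/6) (1/6) (-(t ^ 3) / 9) = a at *
    generalize J (1/6) (5/6) (-(t ^ 3) / 9) = b at *
    generalize J (7/6) (5/6) (-(t ^ 3) / 9) = c at *
    field_simp
    linear_combination 3 * s1
  · have hz : 0 < t ^ 3 / 9 := by positivity
    have d1 := J_hasDerivAt (by norm_num : (0:ℝ) < 5/6) (by norm_num : (-1:ℝ) ≤ 1/6) hz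
    have d2 := ((hasDerivAt_neg_cube t).exp.mul (d1.comp t (hasDerivAt_cube t))).const_mul
      (-kap)
    have s2 := swap_two h
    have : H0 =ᶠ[nhds t] fun t =>
        -kap * (Real.exp (-(t ^ 3) / 9) * J (1/6) (5/6) (t ^ 3 / 9)) := by
      filter_upwards [Ioi_mem_nhds h] with u hu
      simp [H0, not_lt.2 (le_of_lt (show 0 < u from hu))]
    refine (d2.congr_of_eventuallyEq this).congr_deriv ?_
    rw [H0, if_neg (not_lt.2 h.le), G0, if_neg (not_lt.2 h.le), show (1/6:ℝ) + 1 = 7/6 by norm_num,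
      s2]
    simp only [Function.comp_apply]
    generalize Real.exp (-(t ^ 3) / 9) = e
    field_simp
    ring

lemma continuousAt_glue {f g : ℝ → ℝ} (hf : ContinuousWithinAt f (Iic 0) 0)
    (hg : ContinuousWithinAt g (Ici 0) 0) (h : f 0 = g 0) :
    ContinuousAt (fun t => if t < 0 then f t else g t) 0 := by
  rw [← continuousWithinAt_univ, ← Iic_union_Ici (a := (0:ℝ))]
  refine ContinuousWithinAt.union (hf.congr (fun t ht => ?_) (by simp [h]))
    (hg.congr (fun t ht => ?_) (by simp))
  · rcases lt_or_eq_of_le (show t ≤ 0 from ht) with h1 | h1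
    · simp [h1]
    · simp [h1, h]
  · simp [show 0 ≤ t from ht]

lemma J_cwa_cube {p q : ℝ} (hq : 0 < q) (hp : -1 ≤ p) (hpq : p < q) :
    ContinuousWithinAt (fun t : ℝ => J p q (t ^ 3 / 9)) (Ici 0) 0 := by
  refine ContinuousWithinAt.comp (t := Ici 0) (g := J p q) (f := fun t : ℝ => t ^ 3 / 9) ?_
    (by fun_prop) ?_
  · simpa using J_continuousWithinAt hq hp hpq
  · intro t ht
    have ht : 0 ≤ t := ht
    show 0 ≤ t ^ 3 / 9
    positivity

lemma J_cwa_neg_cube {p q : ℝ} (hq : 0 < q) (hp : -1 ≤ p) (hpq : p < q) :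
    ContinuousWithinAt (fun t : ℝ => J p q (-(t ^ 3) / 9)) (Iic 0) 0 := by
  refine ContinuousWithinAt.comp (t := Ici 0) (g := J p q) (f := fun t : ℝ => -(t ^ 3) / 9) ?_
    (by fun_prop) ?_
  · simpa using J_continuousWithinAt hq hp hpq
  · intro t ht
    have ht : 0 ≤ -t := by simpa using ht
    show 0 ≤ -(t ^ 3) / 9
    rw [neg_cube_eq]
    positivity

lemma G0_cont_zero : ContinuousAt G0 0 := by
  refine continuousAt_glue ((J_cwa_neg_cube (by norm_num) (by norm_num) (by norm_num)).div_const _)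
    (((by fun_prop : ContinuousWithinAt (fun t : ℝ => Real.exp (-(t ^ 3) / 9)) (Ici 0) 0).mul
      (J_cwa_cube (by norm_num) (by norm_num) (by norm_num))).div_const _) ?_
  have := J_zero_shift (-1/6) (1/6)
  rw [show (-1/6:ℝ) + 1 = 5/6 by norm_num, show (1/6:ℝ) + 1 = 7/6 by norm_num] at this
  have e : (-(0:ℝ) ^ 3) / 9 = 0 := by norm_num
  have e' : ((0:ℝ) ^ 3) / 9 = 0 := by norm_num
  simp only [e, e', this, Real.exp_zero, one_mul]

lemma H0_cont_zero : ContinuousAt H0 0 := by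
  refine continuousAt_glue (continuousWithinAt_const.mul
    (J_cwa_neg_cube (by norm_num) (by norm_num) (by norm_num)))
    (continuousWithinAt_const.mul
      ((by fun_prop : ContinuousWithinAt (fun t : ℝ => Real.exp (-(t ^ 3) / 9)) (Ici 0) 0).mul
      (J_cwa_cube (by norm_num) (by norm_num) (by norm_num)))) ?_
  simp

/-- At `t = 0` the derivative exists because `G0` and `H0` are continuous there. -/
lemma G0_deriv (t : ℝ) : HasDerivAt G0 (H0 t) t := by
  rcases eq_or_ne t 0 with rfl | h
  · exact hasDerivAt_of_hasDerivAt_of_ne (fun y hy => G0_deriv_ne hy) G0_cont_zero H0_cont_zero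
  · exact G0_deriv_ne h

/-- Together with `G0_deriv`: the profile equation `G'' + (t²/3) G' - (t/6) G = 0` on `ℝ`. -/
lemma H0_deriv (t : ℝ) : HasDerivAt H0 (t / 6 * G0 t - t ^ 2 / 3 * H0 t) t := by
  rcases eq_or_ne t 0 with rfl | h
  · refine hasDerivAt_of_hasDerivAt_of_ne (g := fun t => t / 6 * G0 t - t ^ 2 / 3 * H0 t)
      (fun y hy => H0_deriv_ne hy) H0_cont_zero ?_
    have := G0_cont_zero
    have := H0_cont_zero
    fun_prop
  · exact H0_deriv_ne h

lemma kap_pos : 0 < kap := by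
  have hΓ : 0 < Real.Gamma (5/6) := Real.Gamma_pos_of_pos (by norm_num)
  rw [kap]
  positivity

lemma H0_bound : ∃ C, ∀ t, |H0 t| ≤ C := by
  refine ⟨kap * J (1/6) (5/6) 0, fun t => ?_⟩
  have hk := kap_pos
  by_cases h : t < 0
  · have hz := neg_cube_div_pos h
    have h1 := J_nonneg (p := 1/6) (q := 5/6) hz.le
    rw [H0, if_pos h, neg_mul, abs_neg, abs_of_nonneg (by positivity)]
    have := J_le_zero_arg (by norm_num : (0:ℝ) < 5/6) (by norm_num : (0:ℝ) ≤ 1/6)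
      (by norm_num) hz.le
    gcongr
  · have h0 : 0 ≤ t := not_lt.1 h
    have hz : 0 ≤ t ^ 3 / 9 := by positivity
    have h1 := J_nonneg (p := 1/6) (q := 5/6) hz
    rw [H0, if_neg h, neg_mul, abs_neg, abs_of_nonneg (by positivity)]
    have := J_le_zero_arg (by norm_num : (0:ℝ) < 5/6) (by norm_num : (0:ℝ) ≤ 1/6)
      (by norm_num) hz
    have he : Real.exp (-(t ^ 3) / 9) ≤ 1 := Real.exp_le_one_iff.2 (by linarith)
    have : Real.exp (-(t ^ 3) / 9) * J (1/6) (5/6) (t ^ 3 / 9) ≤ 1 * J (1/6) (5/6) 0 := by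
      gcongr
    rw [one_mul] at this
    gcongr

lemma J_neg_sixth_le {z : ℝ} (hz : 0 ≤ z) :
    J (-1/6) (1/6) z ≤ z ^ ((1:ℝ)/6) * Real.Gamma (1/6) + Real.Gamma (1/3) := by
  have i1 := (Real.GammaIntegral_convergent (by norm_num : (0:ℝ) < 1/6)).const_mul
    (z ^ ((1:ℝ)/6))
  have i2 := Real.GammaIntegral_convergent (by norm_num : (0:ℝ) < 1/3)
  rw [Real.Gamma_eq_integral (by norm_num : (0:ℝ) < 1/6),
    Real.Gamma_eq_integral (by norm_num : (0:ℝ) < 1/3), ← integral_const_mul, ← integral_add i1 i2]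
  refine setIntegral_mono_on (J_integrable_nonneg (by norm_num) (by norm_num) (by norm_num) hz)
    (i1.add i2) measurableSet_Ioi fun s hs => ?_
  have hs : 0 < s := hs
  have h1 := Real.rpow_add_le_add_rpow hz hs.le (by norm_num : (0:ℝ) ≤ 1/6) (by norm_num)
  have h2 : s ^ ((1:ℝ)/3 - 1) = s ^ ((1:ℝ)/6 - 1) * s ^ ((1:ℝ)/6) := by
    rw [← Real.rpow_add hs]; norm_num
  have h3 : 0 ≤ Real.exp (-s) * s ^ ((1:ℝ)/6 - 1) := by positivity
  rw [show -(-1/6:ℝ) = 1/6 by norm_num, h2]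
  nlinarith [mul_le_mul_of_nonneg_left h1 h3]

/-- Growth of order `|t|^{1/2}`, so that `x^{1/6} G0(v x^{-1/3})` stays bounded as `x → 0`. -/
lemma G0_bound : ∃ C, 0 ≤ C ∧ ∀ t, |G0 t| ≤ C * (1 + |t| ^ ((1:ℝ)/2)) := by
  have hg := Gamma_sixth_pos
  have hg3 : 0 < Real.Gamma (1/3) := Real.Gamma_pos_of_pos (by norm_num)
  have hJ0 := J_nonneg (p := 5/6) (q := 7/6) (le_refl (0:ℝ))
  refine ⟨1 + Real.Gamma (1/3) / Real.Gamma (1/6) + J (5/6) (7/6) 0 / Real.Gamma (1/6),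
    by positivity, fun t => ?_⟩
  have ht2 : 0 ≤ |t| ^ ((1:ℝ)/2) := by positivity
  by_cases h : t < 0
  · have hz := neg_cube_div_pos h
    have h1 := J_nonneg (p := -1/6) (q := 1/6) hz.le
    rw [G0, if_pos h, abs_of_nonneg (by positivity)]
    have h2 := J_neg_sixth_le hz.le
    have h3 : (-(t ^ 3) / 9) ^ ((1:ℝ)/6) ≤ |t| ^ ((1:ℝ)/2) := by
      have : |t| ^ ((1:ℝ)/2) = (|t| ^ 3) ^ ((1:ℝ)/6) := by
        rw [← Real.rpow_natCast, ← Real.rpow_mul (abs_nonneg t)]; norm_num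
      rw [this, abs_of_neg h]
      apply Real.rpow_le_rpow hz.le _ (by norm_num)
      have : 0 < (-t) ^ 3 := pow_pos (by linarith) 3
      rw [neg_cube_eq]
      linarith
    have h4 : J (-1/6) (1/6) (-(t ^ 3) / 9) / Real.Gamma (1/6)
        ≤ (|t| ^ ((1:ℝ)/2) * Real.Gamma (1/6) + Real.Gamma (1/3)) / Real.Gamma (1/6) := by
      gcongr
      refine h2.trans ?_
      gcongr
    rw [add_div, mul_div_assoc, div_self hg.ne'] at h4
    have h5 : 0 ≤ Real.Gamma (1/3) / Real.Gamma (1/6) := by positivity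
    have h6 : 0 ≤ J (5/6) (7/6) 0 / Real.Gamma (1/6) := by positivity
    nlinarith [mul_nonneg h5 ht2, mul_nonneg h6 ht2]
  · have h0 : 0 ≤ t := not_lt.1 h
    have hz : 0 ≤ t ^ 3 / 9 := by positivity
    have h1 := J_nonneg (p := 5/6) (q := 7/6) hz
    rw [G0, if_neg h, abs_of_nonneg (by positivity)]
    have := J_le_zero_arg (by norm_num : (0:ℝ) < 7/6) (by norm_num : (0:ℝ) ≤ 5/6)
      (by norm_num) hz
    have he : Real.exp (-(t ^ 3) / 9) ≤ 1 := Real.exp_le_one_iff.2 (by linarith)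
    have h2 : Real.exp (-(t ^ 3) / 9) * J (5/6) (7/6) (t ^ 3 / 9) / Real.Gamma (1/6)
        ≤ 1 * J (5/6) (7/6) 0 / Real.Gamma (1/6) := by
      gcongr
    rw [one_mul] at h2
    have h5 : 0 ≤ Real.Gamma (1/3) / Real.Gamma (1/6) := by positivity
    have h6 : 0 ≤ J (5/6) (7/6) 0 / Real.Gamma (1/6) := by positivity
    nlinarith [mul_nonneg h5 ht2, mul_nonneg h6 ht2]

/-- A function that vanishes at `+∞` faster than every power. -/
def RapidDecay (G : ℝ → ℝ) : Prop :=
  ∀ k : ℝ, Tendsto (fun t : ℝ => t ^ k * G t) atTop (nhds 0)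

lemma rapidDecay_of_le {G : ℝ → ℝ} (C : ℝ)
    (h : ∀ t, 0 ≤ t → |G t| ≤ C * Real.exp (-(t ^ 3) / 9)) : RapidDecay G := by
  intro k
  have t1 := (tendsto_rpow_mul_exp_neg_mul_atTop_nhds_zero k (1/9) (by norm_num)).const_mul |C|
  rw [mul_zero] at t1
  refine squeeze_zero_norm' ?_ t1
  filter_upwards [eventually_ge_atTop 1] with t ht
  have ht0 : 0 ≤ t := by linarith
  rw [norm_mul, Real.norm_of_nonneg (by positivity : 0 ≤ t ^ k), Real.norm_eq_abs]
  have h1 := h t ht0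
  have h2 : Real.exp (-(t ^ 3) / 9) ≤ Real.exp (-(1/9) * t) := by
    apply Real.exp_le_exp.2
    have : t ^ 1 ≤ t ^ 3 := pow_le_pow_right₀ ht (by norm_num)
    linarith
  calc t ^ k * |G t| ≤ t ^ k * (|C| * Real.exp (-(1/9) * t)) := by
        gcongr
        exact h1.trans (mul_le_mul (le_abs_self C) h2 (Real.exp_nonneg _) (abs_nonneg C))
    _ = |C| * (t ^ k * Real.exp (-(1/9) * t)) := by ring

lemma G0_decay : RapidDecay G0 := by
  have hg := Gamma_sixth_pos
  refine rapidDecay_of_le (J (5/6) (7/6) 0 / Real.Gamma (1/6)) fun t h0 => ?_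
  have hz : 0 ≤ t ^ 3 / 9 := by positivity
  have h1 := J_nonneg (p := 5/6) (q := 7/6) hz
  rw [G0, if_neg (not_lt.2 h0), abs_of_nonneg (by positivity), mul_div_assoc, mul_comm]
  have := J_le_zero_arg (by norm_num : (0:ℝ) < 7/6) (by norm_num : (0:ℝ) ≤ 5/6)
    (by norm_num) hz
  gcongr

lemma H0_decay : RapidDecay H0 := by
  have hk := kap_pos
  refine rapidDecay_of_le (kap * J (1/6) (5/6) 0) fun t h0 => ?_
  have hz : 0 ≤ t ^ 3 / 9 := by positivity
  have h1 := J_nonneg (p := 1/6) (q := 5/6) hz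
  rw [H0, if_neg (not_lt.2 h0), neg_mul, abs_neg, abs_of_nonneg (by positivity), mul_assoc,
    mul_comm (J _ _ _)]
  have := J_le_zero_arg (by norm_num : (0:ℝ) < 5/6) (by norm_num : (0:ℝ) ≤ 1/6)
    (by norm_num) hz
  gcongr

lemma RapidDecay.pow_mul {G : ℝ → ℝ} (h : RapidDecay G) (n : ℕ) :
    RapidDecay (fun t => t ^ n * G t) := by
  intro k
  refine (h (k + n)).congr' ?_
  filter_upwards [eventually_gt_atTop 0] with t ht
  rw [Real.rpow_add ht, Real.rpow_natCast]
  ring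

lemma RapidDecay.const_mul {G : ℝ → ℝ} (h : RapidDecay G) (c : ℝ) :
    RapidDecay (fun t => c * G t) := by
  intro k
  have := (h k).const_mul c
  rw [mul_zero] at this
  exact this.congr fun t => by ring

lemma RapidDecay.add {F G : ℝ → ℝ} (hF : RapidDecay F) (hG : RapidDecay G) :
    RapidDecay (fun t => F t + G t) := by
  intro k
  have := (hF k).add (hG k)
  rw [add_zero] at this
  exact this.congr fun t => by ring

/-! ### From classical to weak solutions -/

lemma isOpen_Dinf : IsOpen Dinf := isOpen_Ioi.prod isOpen_univ

lemma mem_Dinf {p : P2} : p ∈ Dinf ↔ 0 < p.1 := by simp [Dinf]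

lemma exists_box {ψ : P2 → ℝ} (hc : HasCompactSupport ψ) :
    ∃ R, 1 ≤ R ∧ ∀ p ∈ tsupport ψ, |p.1| ≤ R ∧ |p.2| ≤ R := by
  obtain ⟨R, hR⟩ := hc.isCompact.isBounded.exists_norm_le
  refine ⟨max R 1, le_max_right _ _, fun p hp => ?_⟩
  have h := (hR p hp).trans (le_max_left R 1)
  rw [Prod.norm_def] at h
  exact ⟨(le_max_left _ _).trans h, (le_max_right _ _).trans h⟩

lemma hasDerivAt_slice_x {ψ : P2 → ℝ} {x v : ℝ} (h : DifferentiableAt ℝ ψ (x, v)) :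
    HasDerivAt (fun y => ψ (y, v)) (fderiv ℝ ψ (x, v) (1, 0)) x :=
  HasFDerivAt.comp_hasDerivAt (f := fun y => (y, v)) x h.hasFDerivAt
    ((hasDerivAt_id x).prodMk (hasDerivAt_const x v))

lemma hasDerivAt_slice_v {ψ : P2 → ℝ} {x v : ℝ} (h : DifferentiableAt ℝ ψ (x, v)) :
    HasDerivAt (fun w => ψ (x, w)) (fderiv ℝ ψ (x, v) (0, 1)) v :=
  HasFDerivAt.comp_hasDerivAt (f := fun w => (x, w)) v h.hasFDerivAt
    ((hasDerivAt_const v x).prodMk (hasDerivAt_id v))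

lemma fderiv_zero_of_notMem {ψ : P2 → ℝ} {p : P2} (hp : p ∉ tsupport ψ) (e : P2) :
    fderiv ℝ ψ p e = 0 := by
  rw [fderiv_of_notMem_tsupport ℝ hp]; rfl

lemma continuous_fderiv_app {ψ : P2 → ℝ} (hψ : ContDiff ℝ ((⊤ : ℕ∞) : WithTop ℕ∞) ψ) (e : P2) :
    Continuous fun p => fderiv ℝ ψ p e :=
  (hψ.continuous_fderiv (by simp)).clm_apply continuous_const

lemma continuous_slice_v {f : P2 → ℝ} (hf : ContinuousOn f Dinf) {x : ℝ} (hx : 0 < x) :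
    Continuous fun v => f (x, v) := by
  refine hf.comp_continuous (by fun_prop) fun v => mem_Dinf.2 hx

/-- A field that is continuous on the half-plane and vanishes off a compact `K` is integrable on
strips `x > ε` staying away from the boundary. -/
lemma integrableOn_strip {f : P2 → ℝ} {K : Set P2} {ε : ℝ} (hε : 0 < ε) (hK : IsCompact K)
    (hf : ContinuousOn f Dinf) (h0 : ∀ p, p ∉ K → f p = 0) :
    IntegrableOn f (Ioi ε ×ˢ univ) := by
  have hc : IsCompact (K ∩ (Ici ε ×ˢ univ)) := hK.inter_right (isClosed_Ici.prod isClosed_univ)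
  have h1 : IntegrableOn f (K ∩ (Ici ε ×ˢ univ)) :=
    (hf.mono fun p hp => mem_Dinf.2 (hε.trans_le hp.2.1)).integrableOn_compact hc
  refine h1.of_forall_sdiff_eq_zero (measurableSet_Ioi.prod MeasurableSet.univ) fun p hp => ?_
  apply h0
  intro hpK
  exact hp.2 ⟨hpK, le_of_lt (show ε < p.1 from hp.1.1), mem_univ _⟩

/-- On each line `x = const` the `v`-derivative of `u ψ` integrates to zero. -/
lemma integral_pdv_zero {u uv ψ : P2 → ℝ} {ε : ℝ} (hε : 0 ≤ ε)
    (hψ : ContDiff ℝ ((⊤ : ℕ∞) : WithTop ℕ∞) ψ) (hc : HasCompactSupport ψ)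
    (hu : ContinuousOn u Dinf) (huv : ContinuousOn uv Dinf)
    (hd : ∀ x v, 0 < x → HasDerivAt (fun v => u (x, v)) (uv (x, v)) v)
    (hi : IntegrableOn (fun p => u p * fderiv ℝ ψ p (0, 1) + uv p * ψ p) (Ioi ε ×ˢ univ)) :
    ∫ p in Ioi ε ×ˢ (univ : Set ℝ), (u p * fderiv ℝ ψ p (0, 1) + uv p * ψ p) = 0 := by
  rw [Measure.volume_eq_prod] at hi ⊢
  rw [setIntegral_prod _ hi]
  refine setIntegral_eq_zero_of_forall_eq_zero fun x hx => ?_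
  have hx : 0 < x := hε.trans_lt hx
  rw [setIntegral_univ]
  have hK : IsCompact (Prod.snd '' tsupport ψ) := hc.isCompact.image continuous_snd
  have hno : ∀ v, v ∉ Prod.snd '' tsupport ψ → (x, v) ∉ tsupport ψ := fun v hv hm =>
    hv ⟨_, hm, rfl⟩
  have cu := continuous_slice_v hu hx
  have cuv := continuous_slice_v huv hx
  have cψ : Continuous fun v => ψ (x, v) := hψ.continuous.comp (by fun_prop)
  have cψv : Continuous fun v => fderiv ℝ ψ (x, v) (0, 1) :=
    (continuous_fderiv_app hψ _).comp (by fun_prop)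
  refine integral_eq_zero_of_hasDerivAt_of_integrable (f := fun v => u (x, v) * ψ (x, v)) ?_ ?_ ?_
  · intro v
    have h1 := (hd x v hx).mul (hasDerivAt_slice_v (hψ.differentiable (by simp) (x, v)))
    refine h1.congr_deriv ?_
    ring
  · refine Continuous.integrable_of_hasCompactSupport ((cu.mul cψv).add (cuv.mul cψ))
      (HasCompactSupport.intro hK fun v hv => ?_)
    simp [fderiv_zero_of_notMem (hno v hv), image_eq_zero_of_notMem_tsupport (hno v hv)]
  · refine Continuous.integrable_of_hasCompactSupport (cu.mul cψ)
      (HasCompactSupport.intro hK fun v hv => ?_)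
    simp [image_eq_zero_of_notMem_tsupport (hno v hv)]

/-- Integrating the `x`-derivative of `v u ψ` over the strip `x > ε` leaves the trace on `x = ε`. -/
lemma integral_pdx_strip {u ux ψ : P2 → ℝ} {ε : ℝ} (hε : 0 < ε)
    (hψ : ContDiff ℝ ((⊤ : ℕ∞) : WithTop ℕ∞) ψ) (hc : HasCompactSupport ψ)
    (hu : ContinuousOn u Dinf) (hux : ContinuousOn ux Dinf)
    (hd : ∀ x v, 0 < x → HasDerivAt (fun x => u (x, v)) (ux (x, v)) x) :
    ∫ p in Ioi ε ×ˢ (univ : Set ℝ), (u p * (p.2 * fderiv ℝ ψ p (1, 0)) + p.2 * ux p * ψ p)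
      = -∫ v, v * (u (ε, v) * ψ (ε, v)) := by
  have cψ := hψ.continuous
  have cψx := continuous_fderiv_app hψ (1, 0)
  have hcont : ContinuousOn
      (fun p : P2 => u p * (p.2 * fderiv ℝ ψ p (1, 0)) + p.2 * ux p * ψ p) Dinf := by
    fun_prop
  have hi := integrableOn_strip hε hc.isCompact hcont (fun p hp => by
    simp [fderiv_zero_of_notMem hp, image_eq_zero_of_notMem_tsupport hp])
  obtain ⟨R, -, hR⟩ := exists_box hc
  rw [IntegrableOn, Measure.volume_eq_prod, ← Measure.prod_restrict] at hi
  rw [Measure.volume_eq_prod, ← Measure.prod_restrict, integral_prod_symm _ hi,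
    Measure.restrict_univ, ← integral_neg]
  congr 1
  ext v
  have hno : ∀ x, R < x → (x, v) ∉ tsupport ψ := fun x hx hm => by
    have := (hR _ hm).1
    have h2 := le_abs_self x
    simp only at this
    linarith
  have hcs : ContinuousOn (fun x => u (x, v) * (v * fderiv ℝ ψ (x, v) (1, 0))
      + v * ux (x, v) * ψ (x, v)) (Ioi 0) :=
    hcont.comp (f := fun x : ℝ => (x, v)) (by fun_prop) fun x hx => mem_Dinf.2 hx
  have key := integral_Ioi_of_hasDerivAt_of_tendsto (a := ε) (m := 0)
    (f := fun x => v * (u (x, v) * ψ (x, v)))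
    (f' := fun x => u (x, v) * (v * fderiv ℝ ψ (x, v) (1, 0)) + v * ux (x, v) * ψ (x, v))
    ?_ ?_ ?_ ?_
  · rw [zero_sub] at key
    exact key
  · have h1 := ((hd ε v hε).mul
      (hasDerivAt_slice_x (hψ.differentiable (by simp) (ε, v)))).const_mul v
    exact h1.continuousAt.continuousWithinAt
  · intro x hx
    have hx0 : 0 < x := hε.trans hx
    have h1 := ((hd x v hx0).mul
      (hasDerivAt_slice_x (hψ.differentiable (by simp) (x, v)))).const_mul v
    refine h1.congr_deriv ?_
    ring
  · have h1 : IntegrableOn (fun x => u (x, v) * (v * fderiv ℝ ψ (x, v) (1, 0))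
        + v * ux (x, v) * ψ (x, v)) (Icc ε R) :=
      (hcs.mono fun x hx => hε.trans_le hx.1).integrableOn_Icc
    refine h1.of_forall_sdiff_eq_zero measurableSet_Ioi fun x hx => ?_
    have hxR : R < x := by
      by_contra h
      exact hx.2 ⟨le_of_lt hx.1, not_lt.1 h⟩
    simp [fderiv_zero_of_notMem (hno x hxR), image_eq_zero_of_notMem_tsupport (hno x hxR)]
  · refine tendsto_const_nhds.congr' ?_
    filter_upwards [eventually_gt_atTop R] with x hx
    simp [image_eq_zero_of_notMem_tsupport (hno x hx)]

lemma one_le_rpow_mul {x R : ℝ} (hx : 0 < x) (hR : x ≤ R) :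
    1 ≤ R ^ ((1:ℝ)/6) * x ^ (-(1:ℝ)/6) := by
  have hR0 := hx.trans_le hR
  have h1 : R ^ ((1:ℝ)/6) * R ^ (-(1:ℝ)/6) = 1 := by
    rw [← Real.rpow_add hR0]; norm_num
  have h2 := Real.rpow_le_rpow_of_nonpos hx hR (by norm_num : (-(1:ℝ)/6) ≤ 0)
  calc (1:ℝ) = R ^ ((1:ℝ)/6) * R ^ (-(1:ℝ)/6) := h1.symm
    _ ≤ _ := mul_le_mul_of_nonneg_left h2 (by positivity)

/-- Integrability up to the boundary: `x^{-1/6}` is integrable near `x = 0`. -/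
lemma integrableOn_of_box {f : P2 → ℝ} {R C : ℝ} (hf : ContinuousOn f Dinf)
    (hb : ∀ p ∈ Dinf, p.1 ≤ R → |p.2| ≤ R → |f p| ≤ C * p.1 ^ (-(1:ℝ)/6))
    (h0 : ∀ p, ¬ (|p.1| ≤ R ∧ |p.2| ≤ R) → f p = 0) : IntegrableOn f Dinf := by
  have i1 : IntegrableOn (fun x : ℝ => C * x ^ (-(1:ℝ)/6)) (Ioc 0 R) := by
    rcases le_or_gt 0 R with hR | hR
    · have := (intervalIntegral.intervalIntegrable_rpow' (a := 0) (b := R)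
        (by norm_num : (-1:ℝ) < -(1:ℝ)/6)).const_mul C
      rwa [intervalIntegrable_iff_integrableOn_Ioc_of_le hR] at this
    · simp [Ioc_eq_empty (not_lt.2 hR.le)]
  have i2 : IntegrableOn (fun _ : ℝ => (1:ℝ)) (Icc (-R) R) := by simp
  have i3 : IntegrableOn (fun p : P2 => C * p.1 ^ (-(1:ℝ)/6) * 1) (Ioc 0 R ×ˢ Icc (-R) R) := by
    rw [IntegrableOn, Measure.volume_eq_prod, ← Measure.prod_restrict]
    exact Integrable.mul_prod (f := fun x : ℝ => C * x ^ (-(1:ℝ)/6)) (g := fun _ : ℝ => (1:ℝ)) i1 i2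
  have hms : MeasurableSet (Ioc 0 R ×ˢ Icc (-R) R) := measurableSet_Ioc.prod measurableSet_Icc
  have hsub : Ioc 0 R ×ˢ Icc (-R) R ⊆ Dinf := fun p hp => mem_Dinf.2 hp.1.1
  have i4 : IntegrableOn f (Ioc 0 R ×ˢ Icc (-R) R) := by
    refine Integrable.mono' i3 ((hf.mono hsub).aestronglyMeasurable hms) ?_
    filter_upwards [ae_restrict_mem hms] with p hp
    rw [mul_one, Real.norm_eq_abs]
    exact hb p (hsub hp) hp.1.2 (abs_le.2 ⟨hp.2.1, hp.2.2⟩)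
  refine i4.of_forall_sdiff_eq_zero isOpen_Dinf.measurableSet fun p hp => h0 p fun hh => hp.2 ?_
  have h1 := mem_Dinf.1 hp.1
  exact ⟨⟨h1, (le_abs_self _).trans hh.1⟩, abs_le.1 hh.2⟩

/-- A classical solution that is bounded near the boundary, has zero trace on the incoming part
and whose `v`-derivative is `O(x^{-1/6})` is a weak solution: integrate over `x > ε`, where only
the trace term on `x = ε` survives, and let `ε → 0`. -/
theorem weak_of_classical {φ φx w : P2 → ℝ}
    (cφ : ContinuousOn φ Dinf) (cφx : ContinuousOn φx Dinf) (cw : ContinuousOn w Dinf)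
    (hx : ∀ x v, 0 < x → HasDerivAt (fun x => φ (x, v)) (φx (x, v)) x)
    (hv : ∀ x v, 0 < x → HasDerivAt (fun v => φ (x, v)) (w (x, v)) v)
    (hvv : ∀ x v, 0 < x → HasDerivAt (fun v => w (x, v)) (v * φx (x, v)) v)
    (hb : ∀ R, 1 ≤ R → ∃ C, 0 ≤ C ∧ ∀ x v, 0 < x → x ≤ R → |v| ≤ R →
      |φ (x, v)| ≤ C ∧ |w (x, v)| ≤ C * x ^ (-(1:ℝ)/6))
    (hdec : ∀ v, 0 < v → Tendsto (fun x => φ (x, v)) (nhdsWithin 0 (Ioi 0)) (nhds 0)) :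
    IsWeakSolZero φ w := by
  refine ⟨(cφ.pow 2).locallyIntegrableOn isOpen_Dinf.measurableSet,
    (cw.pow 2).locallyIntegrableOn isOpen_Dinf.measurableSet, ?_, ?_⟩
  · intro ψ hψ hc hs
    have cψ := hψ.continuous
    have cψv := continuous_fderiv_app hψ (0, 1)
    have int : ∀ f : P2 → ℝ, ContinuousOn f Dinf → (∀ p, p ∉ tsupport ψ → f p = 0) →
        IntegrableOn f Dinf := fun f hf h0 =>
      ((hf.mono hs).integrableOn_compact hc.isCompact).of_forall_sdiff_eq_zero
        isOpen_Dinf.measurableSet fun p hp => h0 p hp.2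
    have i1 := int (fun p => φ p * fderiv ℝ ψ p (0, 1)) (by fun_prop)
      fun p hp => by simp [fderiv_zero_of_notMem hp]
    have i2 := int (fun p => w p * ψ p) (by fun_prop)
      fun p hp => by simp [image_eq_zero_of_notMem_tsupport hp]
    have := integral_pdv_zero le_rfl hψ hc cφ cw hv (i1.add i2)
    rw [← Dinf, integral_add i1 i2] at this
    linarith
  · intro ψ hψ hc hs
    have cψ := hψ.continuous
    have cψx := continuous_fderiv_app hψ (1, 0)
    have cψv := continuous_fderiv_app hψ (0, 1)
    obtain ⟨R, hR1, hR⟩ := exists_box hc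
    obtain ⟨C, hC0, hC⟩ := hb R hR1
    obtain ⟨Mx, hMx⟩ := (hc.fderiv_apply (𝕜 := ℝ) (v := (1, 0))).exists_bound_of_continuous cψx
    obtain ⟨Mv, hMv⟩ := (hc.fderiv_apply (𝕜 := ℝ) (v := (0, 1))).exists_bound_of_continuous cψv
    obtain ⟨M, hM⟩ := hc.exists_bound_of_continuous cψ
    have hMx0 : 0 ≤ Mx := (norm_nonneg _).trans (hMx 0)
    have hMv0 : 0 ≤ Mv := (norm_nonneg _).trans (hMv 0)
    have hM0 : 0 ≤ M := (norm_nonneg _).trans (hM 0)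
    have hout : ∀ p : P2, ¬ (|p.1| ≤ R ∧ |p.2| ≤ R) → p ∉ tsupport ψ := fun p hp hm => hp (hR p hm)
    have i1 : IntegrableOn (fun p => φ p * (p.2 * fderiv ℝ ψ p (1, 0))) Dinf := by
      refine integrableOn_of_box (R := R) (C := C * (R * Mx) * R ^ ((1:ℝ)/6)) (by fun_prop) ?_ ?_
      · intro p hp h1 h2
        have hp : 0 < p.1 := mem_Dinf.1 hp
        have h3 := (hC p.1 p.2 hp h1 h2).1
        have h4 := one_le_rpow_mul hp h1
        rw [abs_mul, abs_mul]
        calc |φ p| * (|p.2| * |fderiv ℝ ψ p (1, 0)|) ≤ C * (R * Mx) := by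
              have := hMx p
              rw [Real.norm_eq_abs] at this
              gcongr
          _ ≤ C * (R * Mx) * (R ^ ((1:ℝ)/6) * p.1 ^ (-(1:ℝ)/6)) :=
              le_mul_of_one_le_right (by positivity) h4
          _ = _ := by ring
      · intro p hp
        simp [fderiv_zero_of_notMem (hout p hp)]
    have i2 : IntegrableOn (fun p => w p * fderiv ℝ ψ p (0, 1)) Dinf := by
      refine integrableOn_of_box (R := R) (C := C * Mv) (by fun_prop) ?_ ?_
      · intro p hp h1 h2
        have hp : 0 < p.1 := mem_Dinf.1 hp
        have h3 := (hC p.1 p.2 hp h1 h2).2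
        have := hMv p
        rw [Real.norm_eq_abs] at this
        rw [abs_mul]
        calc |w p| * |fderiv ℝ ψ p (0, 1)| ≤ (C * p.1 ^ (-(1:ℝ)/6)) * Mv := by gcongr
          _ = _ := by ring
      · intro p hp
        simp [fderiv_zero_of_notMem (hout p hp)]
    set g : P2 → ℝ := fun p => w p * fderiv ℝ ψ p (0, 1) - φ p * (p.2 * fderiv ℝ ψ p (1, 0))
      with hg
    have ig : IntegrableOn g Dinf := i2.sub i1
    let e : ℕ → ℝ := fun n => 1 / ((n:ℝ) + 1)
    have he0 : ∀ n, 0 < e n := fun n => by positivity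
    have he1 : ∀ n, e n ≤ 1 := fun n => by
      simp only [e]
      rw [div_le_one (by positivity)]
      have : (0:ℝ) ≤ n := by positivity
      linarith
    have het : Tendsto e atTop (nhds 0) := tendsto_one_div_add_atTop_nhds_zero_nat
    have het' : Tendsto e atTop (nhdsWithin 0 (Ioi 0)) :=
      tendsto_nhdsWithin_iff.2 ⟨het, Eventually.of_forall he0⟩
    have hstrip : ∀ n, ∫ p in Ioi (e n) ×ˢ (univ : Set ℝ), g p
        = ∫ v, v * (φ (e n, v) * ψ (e n, v)) := by
      intro n
      have cvφx : ContinuousOn (fun p : P2 => p.2 * φx p) Dinf := by fun_prop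
      have j1 := integrableOn_strip (he0 n) hc.isCompact
        (f := fun p => w p * fderiv ℝ ψ p (0, 1) + p.2 * φx p * ψ p)
        (by fun_prop)
        fun p hp => by simp [fderiv_zero_of_notMem hp, image_eq_zero_of_notMem_tsupport hp]
      have j2 := integrableOn_strip (he0 n) hc.isCompact
        (f := fun p => φ p * (p.2 * fderiv ℝ ψ p (1, 0)) + p.2 * φx p * ψ p)
        (by fun_prop)
        fun p hp => by simp [fderiv_zero_of_notMem hp, image_eq_zero_of_notMem_tsupport hp]
      have k1 := integral_pdv_zero (he0 n).le hψ hc cw cvφx hvv j1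
      have k2 := integral_pdx_strip (he0 n) hψ hc cφ cφx hx
      have k3 := integral_sub j1 j2
      rw [k1, k2, zero_sub, neg_neg] at k3
      rw [← k3]
      congr 1
      ext p
      simp only [hg]
      ring
    have hU : (⋃ n, Ioi (e n) ×ˢ (univ : Set ℝ)) = Dinf := by
      ext p
      simp only [mem_iUnion, mem_prod, mem_Ioi, mem_univ, and_true, mem_Dinf]
      constructor
      · rintro ⟨n, hn⟩
        exact (he0 n).trans hn
      · intro hp
        exact exists_nat_one_div_lt hp
    -- As `ε → 0` the strip integrals exhaust the half-plane, and the trace terms vanish.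
    have lim1 := tendsto_setIntegral_of_monotone (μ := volume) (f := g)
      (s := fun n => Ioi (e n) ×ˢ (univ : Set ℝ))
      (fun n => measurableSet_Ioi.prod MeasurableSet.univ)
      (fun m n hmn => by
        apply Set.prod_mono_left
        apply Ioi_subset_Ioi
        simp only [e]
        gcongr) (by rw [hU]; exact ig)
    rw [hU] at lim1
    have lim2 : Tendsto (fun n => ∫ v, v * (φ (e n, v) * ψ (e n, v))) atTop
        (nhds (∫ _ : ℝ, (0:ℝ))) := by
      refine tendsto_integral_of_dominated_convergence
        (fun v => (Icc (-R) R).indicator (fun _ => R * (C * M)) v) ?_ ?_ ?_ ?_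
      · intro n
        have c1 := continuous_slice_v cφ (he0 n)
        have c2 : Continuous fun v => ψ (e n, v) := cψ.comp (by fun_prop)
        exact (continuous_id.mul (c1.mul c2)).aestronglyMeasurable
      · exact (integrable_indicator_iff measurableSet_Icc).2 continuousOn_const.integrableOn_Icc
      · intro n
        refine Eventually.of_forall fun v => ?_
        by_cases hvR : v ∈ Icc (-R) R
        · rw [indicator_of_mem hvR, norm_mul, norm_mul]
          have h1 : |v| ≤ R := abs_le.2 hvR
          have h2 := (hC (e n) v (he0 n) ((he1 n).trans hR1) h1).1
          have h3 := hM (e n, v)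
          rw [Real.norm_eq_abs, Real.norm_eq_abs]
          gcongr
        · have : (e n, v) ∉ tsupport ψ := hout _ fun h => hvR (abs_le.1 h.2)
          simp [image_eq_zero_of_notMem_tsupport this, hvR]
      · have hne : ∀ᵐ v : ℝ, v ≠ 0 := by
          simp [ae_iff]
        filter_upwards [hne] with v hv0
        have tψ : Tendsto (fun n => ψ (e n, v)) atTop (nhds (ψ (0, v))) :=
          (cψ.tendsto (0, v)).comp (het.prodMk_nhds tendsto_const_nhds)
        -- For `v < 0` the test function vanishes at `(0, v)`; for `v > 0` the solution does.
        rcases lt_or_gt_of_ne hv0 with h | h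
        · have hz : ψ (0, v) = 0 := by
            apply image_eq_zero_of_notMem_tsupport
            intro hm
            have := (hs ⟨hm, rfl⟩).2
            simp only at this
            linarith
          rw [hz] at tψ
          obtain ⟨C', hC'0, hC'⟩ := hb (max 1 |v|) (le_max_left _ _)
          have t1 : Tendsto (fun n => |v| * (C' * ‖ψ (e n, v)‖)) atTop (nhds 0) := by
            have := (tψ.norm.const_mul C').const_mul |v|
            simpa using this
          refine squeeze_zero_norm (fun n => ?_) t1
          rw [norm_mul, norm_mul, Real.norm_eq_abs, Real.norm_eq_abs]
          have := (hC' (e n) v (he0 n) ((he1 n).trans (le_max_left _ _)) (le_max_right _ _)).1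
          gcongr
        · have := (((hdec v h).comp het').mul tψ).const_mul v
          simpa using this
    rw [integral_zero] at lim2
    have hfin := tendsto_nhds_unique lim1 (lim2.congr fun n => (hstrip n).symm)
    have h4 := integral_sub i2 i1
    rw [hfin] at h4
    linarith

/-! ### Self-similar solutions -/

/-- The self-similar field `x^α G(v x^{-1/3})`. -/
def selfSim (α : ℝ) (G : ℝ → ℝ) : P2 → ℝ :=
  fun p => p.1 ^ α * G (p.2 * p.1 ^ (-(1:ℝ)/3))

/-- `G` is a profile of exponent `α` with derivative `H`: the equation
`G'' + (t²/3) G' - α t G = 0`, written as a first-order system. It is exactly the condition for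
`selfSim α G` to solve `v ∂ₓφ = ∂ᵥᵥφ`. -/
structure IsProfile (α : ℝ) (G H : ℝ → ℝ) : Prop where
  deriv_fst : ∀ t, HasDerivAt G (H t) t
  deriv_snd : ∀ t, HasDerivAt H (α * t * G t - t ^ 2 / 3 * H t) t

lemma IsProfile.contDiff_snd {α : ℝ} {G H : ℝ → ℝ} (h : IsProfile α G H) : ContDiff ℝ 1 H := by
  have cG : Continuous G := continuous_iff_continuousAt.2 fun t => (h.deriv_fst t).continuousAt
  have cH : Continuous H := continuous_iff_continuousAt.2 fun t => (h.deriv_snd t).continuousAt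
  refine contDiff_one_iff_deriv.2 ⟨fun t => (h.deriv_snd t).differentiableAt, ?_⟩
  rw [show deriv H = fun t => α * t * G t - t ^ 2 / 3 * H t from
    funext fun t => (h.deriv_snd t).deriv]
  fun_prop

lemma IsProfile.contDiff_fst {α : ℝ} {G H : ℝ → ℝ} (h : IsProfile α G H) : ContDiff ℝ 2 G := by
  rw [show (2 : WithTop ℕ∞) = 1 + 1 from one_add_one_eq_two.symm, contDiff_succ_iff_deriv]
  refine ⟨fun t => (h.deriv_fst t).differentiableAt, by simp, ?_⟩
  rw [show deriv G = H from funext fun t => (h.deriv_fst t).deriv]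
  exact h.contDiff_snd

lemma selfSim_contDiffOn {α : ℝ} {G : ℝ → ℝ} {n : WithTop ℕ∞} (hG : ContDiff ℝ n G) :
    ContDiffOn ℝ n (selfSim α G) Dinf := by
  have h1 : ∀ β : ℝ, ContDiffOn ℝ n (fun p : P2 => p.1 ^ β) Dinf := fun β =>
    contDiff_fst.contDiffOn.rpow_const_of_ne fun p hp => (mem_Dinf.1 hp).ne'
  exact (h1 α).mul (hG.comp_contDiffOn (contDiff_snd.contDiffOn.mul (h1 _)))

/-- The `v`-derivative of a field agreeing with `selfSim α G` on the half-plane is again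
self-similar. -/
lemma pdv_eq_selfSim {α : ℝ} {G G' : ℝ → ℝ} {φ : P2 → ℝ} (hG : ContDiff ℝ 1 G)
    (hd : ∀ t, HasDerivAt G (G' t) t) (he : EqOn φ (selfSim α G) Dinf) :
    EqOn (pdv φ) (selfSim (α - 1/3) G') Dinf := by
  rintro ⟨x, v⟩ hp
  have hx : 0 < x := mem_Dinf.1 hp
  have hφ : DifferentiableAt ℝ φ (x, v) :=
    (((selfSim_contDiffOn hG).congr he).contDiffAt (isOpen_Dinf.mem_nhds hp)).differentiableAt
      (by simp)
  have h1 := hasDerivAt_slice_v hφ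
  have h2 : HasDerivAt (fun w => φ (x, w)) (x ^ α * (G' (v * x ^ (-(1:ℝ)/3)) *
      (1 * x ^ (-(1:ℝ)/3)))) v := by
    rw [show (fun w => φ (x, w)) = fun w => x ^ α * G (w * x ^ (-(1:ℝ)/3)) from
      funext fun w => he (mem_Dinf.2 hx)]
    exact (HasDerivAt.comp v (hd _) ((hasDerivAt_id v).mul_const _)).const_mul _
  have h3 : x ^ (α - 1/3) = x ^ α * x ^ (-(1:ℝ)/3) := by
    rw [← Real.rpow_add hx]; congr 1; ring
  rw [pdv, h1.unique h2, selfSim]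
  simp only [h3]
  ring

lemma pdx_eq_selfSim {α : ℝ} {G G' : ℝ → ℝ} {φ : P2 → ℝ} (hG : ContDiff ℝ 1 G)
    (hd : ∀ t, HasDerivAt G (G' t) t) (he : EqOn φ (selfSim α G) Dinf) :
    EqOn (pdx φ) (selfSim (α - 1) fun t => α * G t - t / 3 * G' t) Dinf := by
  rintro ⟨x, v⟩ hp
  have hx : 0 < x := mem_Dinf.1 hp
  have hφ : DifferentiableAt ℝ φ (x, v) :=
    (((selfSim_contDiffOn hG).congr he).contDiffAt (isOpen_Dinf.mem_nhds hp)).differentiableAt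
      (by simp)
  have h1 := hasDerivAt_slice_x hφ
  have h2 : HasDerivAt (fun y => φ (y, v)) (α * x ^ (α - 1) * G (v * x ^ (-(1:ℝ)/3)) +
      x ^ α * (G' (v * x ^ (-(1:ℝ)/3)) * (v * (-(1:ℝ)/3 * x ^ (-(1:ℝ)/3 - 1))))) x := by
    have e : (fun y => φ (y, v)) =ᶠ[nhds x] fun y => y ^ α * G (v * y ^ (-(1:ℝ)/3)) := by
      filter_upwards [lt_mem_nhds hx] with y hy
      exact he (mem_Dinf.2 hy)
    refine HasDerivAt.congr_of_eventuallyEq ?_ e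
    have k1 := fun β : ℝ => Real.hasDerivAt_rpow_const (x := x) (p := β) (Or.inl hx.ne')
    exact (k1 α).mul
      (HasDerivAt.comp (h := fun y : ℝ => v * y ^ (-(1:ℝ)/3)) x (hd _) ((k1 _).const_mul v))
  have h3 : x ^ (-(1:ℝ)/3 - 1) = x ^ (-(1:ℝ)/3) * x⁻¹ := by
    rw [Real.rpow_sub_one hx.ne']; rfl
  have h4 : x ^ (α - 1) = x ^ α * x⁻¹ := by
    rw [Real.rpow_sub_one hx.ne']; rfl
  rw [pdx, h1.unique h2, selfSim]
  simp only [h3, h4]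
  ring

/-- Fields with a profile are `C²` and solve `v ∂ₓφ = ∂ᵥᵥφ`. -/
lemma IsProfile.solves {α : ℝ} {G H : ℝ → ℝ} {φ : P2 → ℝ} (h : IsProfile α G H)
    (he : EqOn φ (selfSim α G) Dinf) :
    ContDiffOn ℝ 2 φ Dinf ∧ ∀ p ∈ Dinf, p.2 * pdx φ p = pdv (pdv φ) p := by
  refine ⟨(selfSim_contDiffOn h.contDiff_fst).congr he, ?_⟩
  have hG1 : ContDiff ℝ 1 G := h.contDiff_fst.of_le one_le_two
  have e1 := pdv_eq_selfSim hG1 h.deriv_fst he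
  have e2 := pdv_eq_selfSim h.contDiff_snd h.deriv_snd e1
  have e3 := pdx_eq_selfSim hG1 h.deriv_fst he
  rintro ⟨x, v⟩ hp
  have hx : 0 < x := mem_Dinf.1 hp
  rw [e2 hp, e3 hp]
  have h1 : x ^ (α - 1) = x ^ (α - 1/3 - 1/3) * x ^ (-(1:ℝ)/3) := by
    rw [← Real.rpow_add hx]; congr 1; ring
  simp only [selfSim, h1]
  ring

/-- Rapid decay of the profile gives zero trace on `{0} × (0,∞)`, since
`x^α = v^{3α} t^{-3α}` for `t = v x^{-1/3}`. -/
lemma selfSim_decay {α : ℝ} {G : ℝ → ℝ} {f : ℝ → ℝ} {v : ℝ} (hG : RapidDecay G) (hv : 0 < v)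
    (he : ∀ x, 0 < x → f x = selfSim α G (x, v)) :
    Tendsto f (nhdsWithin 0 (Ioi 0)) (nhds 0) := by
  have ht : Tendsto (fun x : ℝ => v * x ^ (-(1:ℝ)/3)) (nhdsWithin 0 (Ioi 0)) atTop :=
    (tendsto_rpow_neg_nhdsGT_zero (by norm_num)).const_mul_atTop hv
  have h1 := ((hG (-(3 * α))).comp ht).const_mul (v ^ (3 * α))
  rw [mul_zero] at h1
  refine h1.congr' ?_
  filter_upwards [self_mem_nhdsWithin] with x hx
  have hx : 0 < x := hx
  rw [he x hx]
  simp only [Function.comp, selfSim]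
  rw [Real.mul_rpow hv.le (by positivity), ← Real.rpow_mul hx.le, ← mul_assoc, ← mul_assoc,
    ← Real.rpow_add hv]
  rw [show 3 * α + -(3 * α) = 0 by ring, show -(1:ℝ)/3 * -(3 * α) = α by ring, Real.rpow_zero,
    one_mul]

lemma IsProfile.weak {α : ℝ} {G H : ℝ → ℝ} {φ : P2 → ℝ} (h : IsProfile α G H)
    (he : EqOn φ (selfSim α G) Dinf) (hG : RapidDecay G)
    (hb : ∀ R, 1 ≤ R → ∃ C, 0 ≤ C ∧ ∀ x v, 0 < x → x ≤ R → |v| ≤ R →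
      |selfSim α G (x, v)| ≤ C ∧ |selfSim (α - 1/3) H (x, v)| ≤ C * x ^ (-(1:ℝ)/6)) :
    IsWeakSolZero φ (pdv φ) := by
  obtain ⟨c2, hpde⟩ := h.solves he
  have e1 := pdv_eq_selfSim (h.contDiff_fst.of_le one_le_two) h.deriv_fst he
  have cf := c2.continuousOn_fderiv_of_isOpen isOpen_Dinf one_le_two
  have hd : ∀ x v, 0 < x → DifferentiableAt ℝ φ (x, v) := fun x v hx =>
    (c2.contDiffAt (isOpen_Dinf.mem_nhds (mem_Dinf.2 hx))).differentiableAt (by simp)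
  refine weak_of_classical (φx := pdx φ) c2.continuousOn (cf.clm_apply continuousOn_const)
    (cf.clm_apply continuousOn_const) (fun x v hx => hasDerivAt_slice_x (hd x v hx))
    (fun x v hx => hasDerivAt_slice_v (hd x v hx)) (fun x v hx => ?_) (fun R hR => ?_)
    (fun v hv => selfSim_decay hG hv fun x hx => he (mem_Dinf.2 hx))
  · have hm : (x, v) ∈ Dinf := mem_Dinf.2 hx
    have h1 := hasDerivAt_slice_v
      ((((selfSim_contDiffOn h.contDiff_snd).congr e1).contDiffAt
        (isOpen_Dinf.mem_nhds hm)).differentiableAt (by simp))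
    exact h1.congr_deriv (hpde _ hm).symm
  · obtain ⟨C, hC0, hC⟩ := hb R hR
    refine ⟨C, hC0, fun x v hx hxR hvR => ?_⟩
    rw [he (mem_Dinf.2 hx), e1 (mem_Dinf.2 hx)]
    exact hC x v hx hxR hvR

/-! ### The three profiles -/

lemma profile_zero : IsProfile (1/6) G0 H0 :=
  ⟨G0_deriv, fun t => (H0_deriv t).congr_deriv (by ring)⟩

/-- The profile of `φ₋₁`. -/
def Gm1 (t : ℝ) : ℝ := 6 * G0 t + -12 * (t ^ 1 * H0 t)

/-- The derivative of `Gm1`. -/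
def Hm1 (t : ℝ) : ℝ := -6 * H0 t - 2 * t ^ 2 * G0 t + 4 * t ^ 3 * H0 t

/-- The profile of `φ₁`. -/
def G1 (t : ℝ) : ℝ := 5/6 * G0 t + 1/9 * (t ^ 3 * G0 t) + 1/3 * (t ^ 1 * H0 t)

/-- The derivative of `G1`. -/
def H1 (t : ℝ) : ℝ := 7/18 * (t ^ 2 * G0 t) + 7/6 * H0 t

lemma profile_m1 : IsProfile (-5/6) Gm1 Hm1 := by
  constructor
  · intro t
    have h := ((G0_deriv t).const_mul 6).add
      ((((hasDerivAt_id t).pow 1).mul (H0_deriv t)).const_mul (-12))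
    refine HasDerivAt.congr_deriv h ?_
    simp only [Hm1, id]
    norm_num
    ring
  · intro t
    have h := (((H0_deriv t).const_mul (-6)).sub
      ((((hasDerivAt_id t).pow 2).const_mul 2).mul (G0_deriv t))).add
      ((((hasDerivAt_id t).pow 3).const_mul 4).mul (H0_deriv t))
    refine HasDerivAt.congr_deriv h ?_
    simp only [Hm1, Gm1, id]
    norm_num
    ring

lemma profile_one : IsProfile (7/6) G1 H1 := by
  constructor
  · intro t
    have h := (((G0_deriv t).const_mul (5/6)).add
      ((((hasDerivAt_id t).pow 3).mul (G0_deriv t)).const_mul (1/9))).add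
      ((((hasDerivAt_id t).pow 1).mul (H0_deriv t)).const_mul (1/3))
    refine HasDerivAt.congr_deriv h ?_
    simp only [H1, id]
    norm_num
    ring
  · intro t
    have h := ((((hasDerivAt_id t).pow 2).mul (G0_deriv t)).const_mul (7/18)).add
      ((H0_deriv t).const_mul (7/6))
    refine HasDerivAt.congr_deriv h ?_
    simp only [H1, G1, id]
    norm_num
    ring

lemma Gm1_decay : RapidDecay Gm1 :=
  (G0_decay.const_mul 6).add ((H0_decay.pow_mul 1).const_mul (-12))

lemma G1_decay : RapidDecay G1 :=
  ((G0_decay.const_mul (5/6)).add ((G0_decay.pow_mul 3).const_mul (1/9))).add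
    ((H0_decay.pow_mul 1).const_mul (1/3))

/-! ### Identification of the explicit formulas -/

lemma U1_eq {z : ℝ} (hz : 0 ≤ z) : U1 z = 6 * J (5/6) (7/6) z / Real.Gamma (1/6) := by
  have h := Gamma_mul_laplace (by norm_num : (0:ℝ) < 5/6) (by norm_num : (0:ℝ) < 7/6) hz
  rw [show (5/6:ℝ) - 1 = -(1:ℝ)/6 by norm_num, show -(7/6:ℝ) = -(7:ℝ)/6 by norm_num,
    Gamma_seven_sixths] at h
  have h5 : Real.Gamma (5/6) ≠ 0 := (Real.Gamma_pos_of_pos (by norm_num)).ne'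
  have hg := Gamma_sixth_pos.ne'
  rw [U1]
  field_simp at h ⊢
  linarith

lemma U2_eq (z : ℝ) : U2 z = J (-1/6) (1/6) z / Real.Gamma (1/6) := by
  rw [U2, J, show (1/6:ℝ) - 1 = -(5:ℝ)/6 by norm_num, show -(-1/6:ℝ) = (1:ℝ)/6 by norm_num]
  ring

lemma U3_eq {z : ℝ} (hz : 0 ≤ z) :
    U3 z = 36/7 * J (11/6) (13/6) z / Real.Gamma (1/6) := by
  have h := Gamma_mul_laplace (by norm_num : (0:ℝ) < 11/6) (by norm_num : (0:ℝ) < 13/6) hz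
  rw [show (11/6:ℝ) - 1 = (5:ℝ)/6 by norm_num, show -(13/6:ℝ) = -(13:ℝ)/6 by norm_num,
    Gamma_thirteen_sixths] at h
  have h5 : Real.Gamma (11/6) ≠ 0 := (Real.Gamma_pos_of_pos (by norm_num)).ne'
  have hg := Gamma_sixth_pos.ne'
  rw [U3]
  field_simp at h ⊢
  linarith

lemma G0_neg {t : ℝ} (h : t < 0) : G0 t = U2 (-(t ^ 3) / 9) := by
  rw [G0, if_pos h, U2_eq]

lemma G0_nonneg {t : ℝ} (h : 0 ≤ t) :
    G0 t = 1/6 * Real.exp (-(t ^ 3) / 9) * U1 (t ^ 3 / 9) := by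
  rw [G0, if_neg (not_lt.2 h), U1_eq (by positivity)]
  ring

/-- The combination `6 G0 - 12 t H0` removes the term `z J (5/6) (1/6)` of `split_one`. -/
lemma Gm1_neg {t : ℝ} (h : t < 0) : Gm1 t = U1 (-(t ^ 3) / 9) := by
  have hg := Gamma_sixth_pos.ne'
  have hz : 0 < -(t ^ 3) / 9 := neg_cube_div_pos h
  have h1 := swap_one (neg_pos.2 h)
  have h2 := split_one hz
  rw [← neg_cube_eq] at h1
  rw [Gm1, G0, H0, if_pos h, if_pos h, U1_eq hz.le]
  generalize J (-1/6) (1/6) (-(t ^ 3) / 9) = a at *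
  generalize J (5/6) (7/6) (-(t ^ 3) / 9) = b at *
  generalize J (1/6) (5/6) (-(t ^ 3) / 9) = c at *
  field_simp
  linear_combination 6 * h2 - 2/3 * t * h1

lemma Gm1_nonneg {t : ℝ} (h : 0 ≤ t) :
    Gm1 t = 6 * Real.exp (-(t ^ 3) / 9) * U2 (t ^ 3 / 9) := by
  have hg := Gamma_sixth_pos.ne'
  rw [Gm1, G0, H0, if_neg (not_lt.2 h), if_neg (not_lt.2 h), U2_eq]
  rcases h.eq_or_lt with rfl | h
  · have := J_zero_shift (-1/6) (1/6)
    rw [show (-1/6:ℝ) + 1 = 5/6 by norm_num, show (1/6:ℝ) + 1 = 7/6 by norm_num] at this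
    norm_num
    norm_num at this
    rw [this]
  · have h1 := swap_one h
    have h2 := split_one (z := t ^ 3 / 9) (by positivity)
    generalize J (-1/6) (1/6) (t ^ 3 / 9) = a at *
    field_simp
    linear_combination -6 * h2 - 2/3 * t * h1

lemma G1_neg {t : ℝ} (h : t < 0) : G1 t = -U4 (-(t ^ 3) / 9) := by
  have h1 := Gm1_neg h
  rw [Gm1] at h1
  rw [U4, ← h1, ← G0_neg h, G1]
  ring

lemma G1_nonneg {t : ℝ} (h : 0 ≤ t) :
    G1 t = 35/216 * Real.exp (-(t ^ 3) / 9) * U3 (t ^ 3 / 9) := by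
  have hg := Gamma_sixth_pos.ne'
  rw [G1, G0, H0, if_neg (not_lt.2 h), if_neg (not_lt.2 h), U3_eq (by positivity)]
  rcases h.eq_or_lt with rfl | h
  · have := J_zero_shift (5/6) (7/6)
    rw [show (5/6:ℝ) + 1 = 11/6 by norm_num, show (7/6:ℝ) + 1 = 13/6 by norm_num] at this
    norm_num
    rw [this]
    ring
  · have h1 := swap_one h
    have h2 := parts_one (z := t ^ 3 / 9) (by positivity)
    have h3 := split_two (z := t ^ 3 / 9) (by positivity)
    field_simp
    linear_combination 244944 * (t / 54 * h1 - t ^ 3 / 9 * h2 + 5/6 * h3)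

/-- The relation between the similarity variable `t = v x^{-1/3}` and the argument `v³/(9x)`. -/
lemma simVar {x : ℝ} (hx : 0 < x) (v : ℝ) :
    (v * x ^ (-(1:ℝ)/3)) ^ 3 / 9 = v ^ 3 / (9 * x) ∧
      -((v * x ^ (-(1:ℝ)/3)) ^ 3) / 9 = -(v ^ 3) / (9 * x) := by
  have h : (x ^ (-(1:ℝ)/3)) ^ 3 = x⁻¹ := by
    rw [← Real.rpow_natCast, ← Real.rpow_mul hx.le, ← Real.rpow_neg_one]
    norm_num
  rw [mul_pow, h]
  constructor <;> field_simp

lemma phi0_eq : EqOn (fun p : P2 => phi0 p.1 p.2) (selfSim (1/6) G0) Dinf := by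
  rintro ⟨x, v⟩ hp
  have hx : 0 < x := mem_Dinf.1 hp
  have hc : 0 < x ^ (-(1:ℝ)/3) := by positivity
  obtain ⟨e1, e2⟩ := simVar hx v
  have hg := Gamma_sixth_pos.ne'
  simp only [phi0, selfSim]
  split_ifs with h
  · rw [G0_neg (mul_neg_of_neg_of_pos h hc), e2]
  · rw [G0_nonneg (mul_nonneg (not_lt.1 h) hc.le), e1, e2, Gamma_seven_sixths]
    field_simp

lemma phim1_eq : EqOn (fun p : P2 => phim1 p.1 p.2) (selfSim (-5/6) Gm1) Dinf := by
  rintro ⟨x, v⟩ hp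
  have hx : 0 < x := mem_Dinf.1 hp
  have hc : 0 < x ^ (-(1:ℝ)/3) := by positivity
  obtain ⟨e1, e2⟩ := simVar hx v
  have hg := Gamma_sixth_pos.ne'
  simp only [phim1, selfSim]
  split_ifs with h
  · rw [Gm1_neg (mul_neg_of_neg_of_pos h hc), e2]
  · rw [Gm1_nonneg (mul_nonneg (not_lt.1 h) hc.le), e1, e2, Gamma_seven_sixths,
      show Real.Gamma (1/6) / (Real.Gamma (1/6) / 6) = 6 by field_simp]
    ring

lemma phi1_eq : EqOn (fun p : P2 => phi1 p.1 p.2) (selfSim (7/6) G1) Dinf := by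
  rintro ⟨x, v⟩ hp
  have hx : 0 < x := mem_Dinf.1 hp
  have hc : 0 < x ^ (-(1:ℝ)/3) := by positivity
  obtain ⟨e1, e2⟩ := simVar hx v
  have hg := Gamma_sixth_pos.ne'
  simp only [phi1, selfSim]
  split_ifs with h
  · rw [G1_neg (mul_neg_of_neg_of_pos h hc), e2]
    ring
  · rw [G1_nonneg (mul_nonneg (not_lt.1 h) hc.le), e1, e2, Gamma_thirteen_sixths,
      show 7/36 * Real.Gamma (1/6) / (-(6/5) * Real.Gamma (1/6)) = -(35/216) by
        field_simp; norm_num]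
    ring

/-! ### Bounds near the boundary -/

lemma selfSim_G0_bound (R : ℝ) :
    ∃ C, 0 ≤ C ∧ ∀ x v, 0 < x → x ≤ R → |v| ≤ R → |selfSim (1/6) G0 (x, v)| ≤ C := by
  obtain ⟨C, hC0, hC⟩ := G0_bound
  refine ⟨C * (|R| ^ ((1:ℝ)/6) + |R| ^ ((1:ℝ)/2)), by positivity, fun x v hx hxR hvR => ?_⟩
  have hR : |R| = R := abs_of_pos (hx.trans_le hxR)
  have hc : 0 < x ^ (-(1:ℝ)/3) := by positivity
  have h1 := hC (v * x ^ (-(1:ℝ)/3))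
  have h2 : x ^ ((1:ℝ)/6) * |v * x ^ (-(1:ℝ)/3)| ^ ((1:ℝ)/2) = |v| ^ ((1:ℝ)/2) := by
    rw [abs_mul, abs_of_pos hc, Real.mul_rpow (abs_nonneg _) hc.le, ← Real.rpow_mul hx.le,
      mul_left_comm, ← Real.rpow_add hx]
    norm_num
  rw [hR]
  simp only [selfSim, abs_mul]
  rw [abs_of_pos (by positivity : 0 < x ^ ((1:ℝ)/6))]
  calc x ^ ((1:ℝ)/6) * |G0 (v * x ^ (-(1:ℝ)/3))|
      ≤ x ^ ((1:ℝ)/6) * (C * (1 + |v * x ^ (-(1:ℝ)/3)| ^ ((1:ℝ)/2))) := by gcongr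
    _ = C * (x ^ ((1:ℝ)/6) + x ^ ((1:ℝ)/6) * |v * x ^ (-(1:ℝ)/3)| ^ ((1:ℝ)/2)) := by ring
    _ ≤ _ := by rw [h2]; gcongr

lemma weak_phi0 : IsWeakSolZero (fun p : P2 => phi0 p.1 p.2) (pdv fun p : P2 => phi0 p.1 p.2) := by
  refine profile_zero.weak phi0_eq G0_decay fun R _ => ?_
  obtain ⟨A, hA0, hA⟩ := selfSim_G0_bound R
  obtain ⟨B, hB⟩ := H0_bound
  refine ⟨max A B, le_max_of_le_left hA0, fun x v hx hxR hvR =>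
    ⟨(hA x v hx hxR hvR).trans (le_max_left _ _), ?_⟩⟩
  simp only [selfSim, abs_mul]
  rw [show (1/6:ℝ) - 1/3 = -(1:ℝ)/6 by norm_num,
    abs_of_pos (by positivity : 0 < x ^ (-(1:ℝ)/6)), mul_comm]
  gcongr
  exact (hB _).trans (le_max_right _ _)

/-- Here `φ₁` and `∂ᵥφ₁` are polynomial combinations of the bounded quantities
`a = x^{1/6} G0(v x^{-1/3})` and `b = x^{5/6} H0(v x^{-1/3})`. -/
lemma weak_phi1 : IsWeakSolZero (fun p : P2 => phi1 p.1 p.2) (pdv fun p : P2 => phi1 p.1 p.2) := by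
  refine profile_one.weak phi1_eq G1_decay fun R hR1 => ?_
  obtain ⟨A, hA0, hA⟩ := selfSim_G0_bound R
  obtain ⟨B, hB⟩ := H0_bound
  have hB0 : 0 ≤ B := (abs_nonneg _).trans (hB 0)
  have hR0 : 0 ≤ R := by linarith
  set D := R ^ ((5:ℝ)/6) * B with hD
  have hD0 : 0 ≤ D := by positivity
  refine ⟨max (5/6 * (R * A) + 1/9 * (R ^ 3 * A) + 1/3 * (R * D))
    ((7/18 * (R ^ 2 * A) + 7/6 * D) * R ^ ((1:ℝ)/6)), le_max_of_le_left (by positivity),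
    fun x v hx hxR hvR => ?_⟩
  have hc : 0 < x ^ (-(1:ℝ)/3) := by positivity
  have hA := hA x v hx hxR hvR
  set a := selfSim (1/6) G0 (x, v) with ha
  set b := x ^ ((5:ℝ)/6) * H0 (v * x ^ (-(1:ℝ)/3)) with hb
  have hbD : |b| ≤ D := by
    rw [hb, abs_mul, abs_of_pos (by positivity : 0 < x ^ ((5:ℝ)/6)), hD]
    have := hB (v * x ^ (-(1:ℝ)/3))
    gcongr
  have hxa : |x| ≤ R := by rwa [abs_of_pos hx]
  have r1 : x ^ ((7:ℝ)/6) = x * x ^ ((1:ℝ)/6) := by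
    rw [← Real.rpow_one_add' hx.le (by norm_num)]; norm_num
  have r2 : x ^ ((7:ℝ)/6) * (x ^ (-(1:ℝ)/3)) ^ 3 = x ^ ((1:ℝ)/6) := by
    rw [← Real.rpow_natCast, ← Real.rpow_mul hx.le, ← Real.rpow_add hx]; norm_num
  have r3 : x ^ ((7:ℝ)/6) * x ^ (-(1:ℝ)/3) = x ^ ((5:ℝ)/6) := by
    rw [← Real.rpow_add hx]; norm_num
  have r4 : x ^ ((5:ℝ)/6) * (x ^ (-(1:ℝ)/3)) ^ 2 = x ^ ((1:ℝ)/6) := by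
    rw [← Real.rpow_natCast, ← Real.rpow_mul hx.le, ← Real.rpow_add hx]; norm_num
  have e1 : selfSim (7/6) G1 (x, v) = 5/6 * (x * a) + 1/9 * (v ^ 3 * a) + 1/3 * (v * b) := by
    simp only [ha, hb, selfSim, G1]
    linear_combination 5/6 * G0 (v * x ^ (-(1:ℝ)/3)) * r1
      + 1/9 * v ^ 3 * G0 (v * x ^ (-(1:ℝ)/3)) * r2 + 1/3 * v * H0 (v * x ^ (-(1:ℝ)/3)) * r3
  have e2 : selfSim (7/6 - 1/3) H1 (x, v) = 7/18 * (v ^ 2 * a) + 7/6 * b := by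
    rw [show (7/6:ℝ) - 1/3 = 5/6 by norm_num]
    simp only [ha, hb, selfSim, H1]
    linear_combination 7/18 * v ^ 2 * G0 (v * x ^ (-(1:ℝ)/3)) * r4
  constructor
  · refine le_trans ?_ (le_max_left _ _)
    rw [e1]
    refine (abs_add_three _ _ _).trans ?_
    simp only [abs_mul, abs_pow]
    rw [abs_of_pos (by norm_num : (0:ℝ) < 5/6), abs_of_pos (by norm_num : (0:ℝ) < 1/9),
      abs_of_pos (by norm_num : (0:ℝ) < 1/3)]
    gcongr
  · rw [e2]
    have h1 : |7/18 * (v ^ 2 * a) + 7/6 * b| ≤ 7/18 * (R ^ 2 * A) + 7/6 * D := by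
      refine (abs_add_le _ _).trans ?_
      simp only [abs_mul, abs_pow]
      rw [abs_of_pos (by norm_num : (0:ℝ) < 7/18), abs_of_pos (by norm_num : (0:ℝ) < 7/6)]
      gcongr
    calc |7/18 * (v ^ 2 * a) + 7/6 * b| ≤ 7/18 * (R ^ 2 * A) + 7/6 * D := h1
      _ ≤ (7/18 * (R ^ 2 * A) + 7/6 * D) * (R ^ ((1:ℝ)/6) * x ^ (-(1:ℝ)/6)) :=
        le_mul_of_one_le_right (by positivity) (one_le_rpow_mul hx hxR)
      _ = (7/18 * (R ^ 2 * A) + 7/6 * D) * R ^ ((1:ℝ)/6) * x ^ (-(1:ℝ)/6) := by ring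
      _ ≤ _ := by
        gcongr
        exact le_max_right _ _

theorem statement_16 :
    -- `φ₋₁`
    (ContDiffOn ℝ 2 (fun p : P2 => phim1 p.1 p.2) (Set.Ioi (0:ℝ) ×ˢ (Set.univ : Set ℝ)) ∧
      (∀ p ∈ Set.Ioi (0:ℝ) ×ˢ (Set.univ : Set ℝ),
        p.2 * pdx (fun q : P2 => phim1 q.1 q.2) p
          = pdv (pdv (fun q : P2 => phim1 q.1 q.2)) p) ∧
      (∀ v : ℝ, 0 < v →
        Tendsto (fun x => phim1 x v) (nhdsWithin 0 (Set.Ioi 0)) (nhds 0))) ∧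
    -- `φ₀`
    (ContDiffOn ℝ 2 (fun p : P2 => phi0 p.1 p.2) (Set.Ioi (0:ℝ) ×ˢ (Set.univ : Set ℝ)) ∧
      (∀ p ∈ Set.Ioi (0:ℝ) ×ˢ (Set.univ : Set ℝ),
        p.2 * pdx (fun q : P2 => phi0 q.1 q.2) p
          = pdv (pdv (fun q : P2 => phi0 q.1 q.2)) p) ∧
      (∀ v : ℝ, 0 < v →
        Tendsto (fun x => phi0 x v) (nhdsWithin 0 (Set.Ioi 0)) (nhds 0))) ∧
    -- `φ₁`
    (ContDiffOn ℝ 2 (fun p : P2 => phi1 p.1 p.2) (Set.Ioi (0:ℝ) ×ˢ (Set.univ : Set ℝ)) ∧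
      (∀ p ∈ Set.Ioi (0:ℝ) ×ˢ (Set.univ : Set ℝ),
        p.2 * pdx (fun q : P2 => phi1 q.1 q.2) p
          = pdv (pdv (fun q : P2 => phi1 q.1 q.2)) p) ∧
      (∀ v : ℝ, 0 < v →
        Tendsto (fun x => phi1 x v) (nhdsWithin 0 (Set.Ioi 0)) (nhds 0))) ∧
    -- `φ₀` and `φ₁` are weak solutions with absorbing boundary condition
    IsWeakSolZero (fun p : P2 => phi0 p.1 p.2) (pdv (fun p : P2 => phi0 p.1 p.2)) ∧
    IsWeakSolZero (fun p : P2 => phi1 p.1 p.2) (pdv (fun p : P2 => phi1 p.1 p.2)) := by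
  exact
    ⟨⟨(profile_m1.solves phim1_eq).1, (profile_m1.solves phim1_eq).2,
        fun v hv => selfSim_decay (α := -5/6) Gm1_decay hv fun x hx => phim1_eq (mem_Dinf.2 hx : (x, v) ∈ Dinf)⟩,
      ⟨(profile_zero.solves phi0_eq).1, (profile_zero.solves phi0_eq).2,
        fun v hv => selfSim_decay (α := 1/6) G0_decay hv fun x hx => phi0_eq (mem_Dinf.2 hx : (x, v) ∈ Dinf)⟩,
      ⟨(profile_one.solves phi1_eq).1, (profile_one.solves phi1_eq).2,
        fun v hv => selfSim_decay (α := 7/6) G1_decay hv fun x hx => phi1_eq (mem_Dinf.2 hx : (x, v) ∈ Dinf)⟩,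
      weak_phi0, weak_phi1⟩
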